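/- arXiv:2406.04704 — 2 statements merged into one kernel-verified Lean document; each statement's English description precedes it below -/
import Mathlib

section
/- The class of finite groups all of whose subgroups are k-submodular is a hereditary formation: it is closed under taking subgroups, quotients, and if G/N_1 and G/N_2 belong to the class for normal subgroups N_1, N_2 of G, then G/(N_1 ∩ N_2) belongs to the class. -/
open Pointwise

/-- A subgroup `H` of `K` is `n`-modularly embedded in `K` if either `H ◁ K`, or
`K/Core_K(H)` is a non-nilpotent group of order `p * q ^ n` with `|K : H| = p`
for some primes `p`, `q`. -/
def ModularlyEmbedded {G : Type*} [Group G] (n : ℕ) (H K : Subgroup G) : Prop :=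
  H ≤ K ∧ ((H.subgroupOf K).Normal ∨
    ∃ p q : ℕ, p.Prime ∧ q.Prime ∧
      ¬ Group.IsNilpotent (↥K ⧸ (H.subgroupOf K).normalCore) ∧
      Nat.card (↥K ⧸ (H.subgroupOf K).normalCore) = p * q ^ n ∧
      (H.subgroupOf K).index = p)

/-- `H` is `k`-submodular in `K` if there is a chain `H = H_0 ≤ H_1 ≤ ⋯ ≤ H_m = K`
such that `H_{i-1}` is `n_i`-modularly embedded in `H_i` for some natural number
`n_i ≤ k`, for every `i`. -/
def KSubmodularIn {G : Type*} [Group G] (k : ℕ) (H K : Subgroup G) : Prop :=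
  ∃ (m : ℕ) (c : ℕ → Subgroup G), c 0 = H ∧ c m = K ∧
    ∀ i < m, ∃ n : ℕ, 0 < n ∧ n ≤ k ∧ ModularlyEmbedded n (c i) (c (i + 1))


namespace KSub

def ME {V : Type*} [Group V] (n : ℕ) (W : Subgroup V) : Prop :=
  W.Normal ∨ ∃ p q : ℕ, p.Prime ∧ q.Prime ∧
      ¬ Group.IsNilpotent (V ⧸ W.normalCore) ∧
      Nat.card (V ⧸ W.normalCore) = p * q ^ n ∧ W.index = p

def R {G : Type*} [Group G] (k : ℕ) (H K : Subgroup G) : Prop :=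
  ∃ n : ℕ, 0 < n ∧ n ≤ k ∧ ModularlyEmbedded n H K

theorem ksub_iff {G : Type*} [Group G] {k : ℕ} {H K : Subgroup G} :
    KSubmodularIn k H K ↔ Relation.ReflTransGen (R k) H K := by
  constructor
  · rintro ⟨m, c, rfl, rfl, h⟩
    induction m with
    | zero => exact .refl
    | succ m ih => exact (ih fun i hi => h i (by omega)).tail (h m (by omega))
  · intro h
    induction h with
    | refl => exact ⟨0, fun _ => H, rfl, rfl, by simp⟩
    | @tail B C _ hBC ih =>
      obtain ⟨m, c, h0, hm, h⟩ := ih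
      refine ⟨m + 1, fun i => if i ≤ m then c i else C, by simpa using h0, by simp, ?_⟩
      intro i hi
      rcases Nat.lt_or_ge i m with h1 | h1
      · have : i + 1 ≤ m := h1
        simpa [this, h1.le] using h i h1
      · obtain rfl : i = m := by omega
        have hBC' : ∃ n : ℕ, 0 < n ∧ n ≤ k ∧ ModularlyEmbedded n B C := hBC
        simpa [hm] using hBC'

theorem ksub_trans {G : Type*} [Group G] {k : ℕ} {H K L : Subgroup G}
    (h1 : KSubmodularIn k H K) (h2 : KSubmodularIn k K L) : KSubmodularIn k H L :=
  ksub_iff.2 ((ksub_iff.1 h1).trans (ksub_iff.1 h2))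

theorem ksub_refl {G : Type*} [Group G] {k : ℕ} (H : Subgroup G) : KSubmodularIn k H H :=
  ksub_iff.2 .refl

theorem ksub_le {G : Type*} [Group G] {k : ℕ} {H K : Subgroup G}
    (h : Relation.ReflTransGen (R k) H K) : H ≤ K := by
  induction h with
  | refl => exact le_rfl
  | tail _ h ih => obtain ⟨n, _, _, h, _⟩ := h; exact ih.trans h

theorem core_comap {U V : Type*} [Group U] [Group V] (f : U →* V)
    (hf : Function.Surjective f) (W : Subgroup V) :
    (W.comap f).normalCore = W.normalCore.comap f := by
  ext x
  constructor
  · intro h b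
    obtain ⟨b, rfl⟩ := hf b
    have := h b
    simpa using this
  · intro h b
    have := h (f b)
    simpa using this

theorem me_comap_surj {U V : Type*} [Group U] [Group V] (f : U →* V)
    (hf : Function.Surjective f) (W : Subgroup V) (n : ℕ) :
    ME n (W.comap f) ↔ ME n W := by
  have e : U ⧸ (W.comap f).normalCore ≃* V ⧸ W.normalCore := by
    refine (QuotientGroup.quotientMulEquivOfEq ?_).trans
      (QuotientGroup.quotientKerEquivOfSurjective ((QuotientGroup.mk' W.normalCore).comp f)
        ((QuotientGroup.mk'_surjective _).comp hf))
    rw [core_comap f hf, ← MonoidHom.comap_ker, QuotientGroup.ker_mk']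
  unfold ME
  rw [Group.isNilpotent_congr e, Nat.card_congr e.toEquiv, Subgroup.index_comap_of_surjective _ hf]
  refine or_congr ⟨fun h => ?_, fun h => inferInstance⟩ Iff.rfl
  have := h.map f hf
  rwa [Subgroup.map_comap_eq_self_of_surjective hf] at this

theorem r_comap_surj {U V : Type*} [Group U] [Group V] (f : U →* V)
    (hf : Function.Surjective f) (A B : Subgroup V) (k : ℕ) :
    R k (A.comap f) (B.comap f) ↔ R k A B := by
  unfold R
  refine exists_congr fun n => and_congr_right fun _ => and_congr_right fun _ => ?_
  refine and_congr (Subgroup.comap_le_comap_of_surjective hf) ?_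
  refine me_comap_surj (f.subgroupComap B) ?_ (A.subgroupOf B) n
  rintro ⟨b, hb⟩
  obtain ⟨a, rfl⟩ := hf b
  exact ⟨⟨a, hb⟩, rfl⟩

theorem r_map_inj {U V : Type*} [Group U] [Group V] (f : U →* V)
    (hf : Function.Injective f) (A B : Subgroup U) (k : ℕ) (h : R k A B) :
    R k (A.map f) (B.map f) := by
  obtain ⟨n, h1, h2, h3, h4⟩ := h
  refine ⟨n, h1, h2, Subgroup.map_mono h3, ?_⟩
  refine (me_comap_surj (B.equivMapOfInjective f hf).toMonoidHom
    (B.equivMapOfInjective f hf).surjective ((A.map f).subgroupOf (B.map f)) n).1 ?_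
  have h5 : ((A.map f).subgroupOf (B.map f)).comap (B.equivMapOfInjective f hf).toMonoidHom
      = A.subgroupOf B := by
    ext x
    simp [Subgroup.mem_subgroupOf, hf.eq_iff]
  rw [h5]
  exact h4

theorem ksub_comap_surj {U V : Type*} [Group U] [Group V] (f : U →* V)
    (hf : Function.Surjective f) {A B : Subgroup V} {k : ℕ} (h : KSubmodularIn k A B) :
    KSubmodularIn k (A.comap f) (B.comap f) :=
  ksub_iff.2 ((ksub_iff.1 h).lift (Subgroup.comap f) fun _ _ h => (r_comap_surj f hf _ _ k).2 h)

theorem ksub_map_inj {U V : Type*} [Group U] [Group V] (f : U →* V)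
    (hf : Function.Injective f) {A B : Subgroup U} {k : ℕ} (h : KSubmodularIn k A B) :
    KSubmodularIn k (A.map f) (B.map f) :=
  ksub_iff.2 ((ksub_iff.1 h).lift (Subgroup.map f) fun _ _ h => r_map_inj f hf _ _ k h)

theorem ksub_of_comap_surj {U V : Type*} [Group U] [Group V] (f : U →* V)
    (hf : Function.Surjective f) {A : Subgroup V} {k : ℕ}
    (h : KSubmodularIn k (A.comap f) ⊤) : KSubmodularIn k A ⊤ := by
  rw [ksub_iff] at h ⊢
  have key : ∀ B, Relation.ReflTransGen (R k) (A.comap f) B →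
      Relation.ReflTransGen (R k) A (B.map f) := by
    intro B hB
    induction hB with
    | refl => rw [Subgroup.map_comap_eq_self_of_surjective hf]
    | @tail B C h1 h2 ih =>
      refine ih.tail ?_
      have hk : f.ker ≤ A.comap f := fun x hx => by
        have : f x = 1 := hx
        simp [this]
      rw [← r_comap_surj f hf, Subgroup.comap_map_eq_self (hk.trans (ksub_le h1)),
        Subgroup.comap_map_eq_self (hk.trans (ksub_le (h1.tail h2)))]
      exact h2
  simpa [← MonoidHom.range_eq_map, MonoidHom.range_eq_top.2 hf] using key _ h

theorem r_top {G : Type*} [Group G] {k n : ℕ} (h0 : 0 < n) (hn : n ≤ k) (W : Subgroup G)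
    (h : ME n W) : R k W ⊤ := by
  refine ⟨n, h0, hn, le_top, ?_⟩
  exact (me_comap_surj (Subgroup.topEquiv : (⊤ : Subgroup G) ≃* G).toMonoidHom
    (Subgroup.topEquiv : (⊤ : Subgroup G) ≃* G).surjective W n).2 h

theorem me_of_top {G : Type*} [Group G] {n : ℕ} (W : Subgroup G)
    (h : ModularlyEmbedded n W ⊤) : ME n W := by
  exact (me_comap_surj (Subgroup.topEquiv : (⊤ : Subgroup G) ≃* G).toMonoidHom
    (Subgroup.topEquiv : (⊤ : Subgroup G) ≃* G).surjective W n).1 h.2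

theorem ksub_of_nilp {G : Type*} [Group G] [Finite G] [Group.IsNilpotent G] {k : ℕ} (hk : 0 < k)
    (W : Subgroup G) : KSubmodularIn k W ⊤ := by
  induction W using WellFoundedGT.induction with
  | _ W ih =>
    by_cases hW : W = ⊤
    · rw [hW]; exact ksub_refl _
    have h1 : W < Subgroup.normalizer (W : Set G) :=
      Group.normalizerCondition_of_isNilpotent W (lt_top_iff_ne_top.2 hW)
    refine ksub_trans (ksub_iff.2 (.single ⟨1, one_pos, hk, h1.le, .inl ?_⟩)) (ih _ h1)
    infer_instance

theorem ksub_of_nilp_core {G : Type*} [Group G] [Finite G] {k : ℕ} (hk : 0 < k)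
    (W : Subgroup G) (h : Group.IsNilpotent (G ⧸ W.normalCore)) : KSubmodularIn k W ⊤ := by
  have := ksub_comap_surj (QuotientGroup.mk' W.normalCore) (QuotientGroup.mk'_surjective _)
    (ksub_of_nilp hk (W.map (QuotientGroup.mk' W.normalCore)))
  rwa [Subgroup.comap_map_eq_self, Subgroup.comap_top] at this
  rw [QuotientGroup.ker_mk']
  exact W.normalCore_le

theorem ksub_comap_me {U V : Type*} [Group U] [Group V] [Finite U] [Finite V] (f : U →* V)
    {k n : ℕ} (h0 : 0 < n) (hn : n ≤ k) (W : Subgroup V) (h : ME n W) :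
    KSubmodularIn k (W.comap f) ⊤ := by
  have hk : 0 < k := h0.trans_le hn
  rcases h with h | ⟨p, q, hp, hq, -, hc, hi⟩
  · exact ksub_iff.2 (.single (r_top one_pos hk _ (.inl inferInstance)))
  by_cases hnil : Group.IsNilpotent (U ⧸ (W.comap f).normalCore)
  · exact ksub_of_nilp_core hk _ hnil
  have := Fact.mk hp
  have := Fact.mk hq
  set D := (W.comap f).normalCore with hD
  have hle : W.normalCore.comap f ≤ D :=
    Subgroup.normal_le_normalCore.2 (Subgroup.comap_mono W.normalCore_le)
  have hC : W.normalCore.index = p * q ^ n := hc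
  have hDi : D.index ∣ p * q ^ n := by
    refine (Subgroup.index_dvd_of_le hle).trans ?_
    rw [Subgroup.index_comap, ← hC]
    exact Subgroup.relIndex_dvd_index_of_normal _ _
  have hDW : D.relIndex (W.comap f) ∣ q ^ n := by
    refine (Subgroup.relIndex_dvd_of_le_left _ hle).trans ?_
    rw [Subgroup.relIndex_comap]
    have h1 : W.normalCore.relIndex W = q ^ n := by
      have := Subgroup.relIndex_mul_index W.normalCore_le
      rw [hi, hC, mul_comm] at this
      exact Nat.eq_of_mul_eq_mul_left hp.pos this
    rw [← h1]
    have h2 : (W.comap f).map f ≤ W := Subgroup.map_comap_le _ _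
    rw [← Subgroup.relIndex_subgroupOf h2]
    exact Subgroup.relIndex_dvd_index_of_normal _ _
  have hle' : D ≤ W.comap f := Subgroup.normalCore_le _
  have hmul := Subgroup.relIndex_mul_index hle'
  have hidx : (W.comap f).index ≤ p := by
    rw [Subgroup.index_comap, ← hi, ← Subgroup.relIndex_top_right]
    refine Subgroup.relIndex_le_of_le_right le_top ?_
    rw [Subgroup.relIndex_top_right]
    exact Subgroup.index_ne_zero_of_finite
  -- D.index = p * q ^ l
  have hnp : ∀ r m : ℕ, r.Prime → D.index ≠ r ^ m := by
    intro r m hr he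
    have := Fact.mk hr
    exact hnil (IsPGroup.of_card (p := r) (n := m) he).isNilpotent
  obtain ⟨a, b, ha, hb, hab⟩ := (Nat.dvd_mul).1 hDi
  obtain ⟨l, hl, rfl⟩ := (Nat.dvd_prime_pow hq).1 hb
  have ha' : a = p := by
    rcases (Nat.dvd_prime hp).1 ha with rfl | h
    · exact absurd (by rw [← hab, one_mul]) (hnp q l hq)
    · exact h
  subst ha'
  have hl0 : 0 < l := by
    rcases Nat.eq_zero_or_pos l with rfl | h
    · exact absurd (by rw [← hab]; simp) (hnp a 1 hp)
    · exact h
  have hpq : a ≠ q := by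
    rintro rfl
    exact absurd (by rw [← hab, pow_succ']) (hnp a (l + 1) hp)
  have hdv : a ∣ (W.comap f).index := by
    have h1 : a ∣ D.relIndex (W.comap f) * (W.comap f).index := by
      rw [hmul, ← hab]; exact dvd_mul_right _ _
    rcases hp.dvd_mul.1 h1 with h | h
    · exact absurd ((Nat.prime_dvd_prime_iff_eq hp hq).1 (hp.dvd_of_dvd_pow (h.trans hDW))) hpq
    · exact h
  have hieq : (W.comap f).index = a :=
    le_antisymm hidx (Nat.le_of_dvd (Nat.pos_of_ne_zero Subgroup.index_ne_zero_of_finite) hdv)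
  exact ksub_iff.2 (.single (r_top hl0 (hl.trans hn) _
    (.inr ⟨a, q, hp, hq, hnil, hab.symm, hieq⟩)))

theorem ksub_comap {U V : Type*} [Group U] [Group V] [Finite U] [Finite V] (f : U →* V)
    {k : ℕ} {A B : Subgroup V} (h : KSubmodularIn k A B) :
    KSubmodularIn k (A.comap f) (B.comap f) := by
  rw [ksub_iff] at h
  induction h with
  | refl => exact ksub_refl _
  | @tail B C _ h ih =>
    refine ksub_trans ih ?_
    obtain ⟨n, h0, hn, hle, h⟩ := h
    have := ksub_map_inj (C.comap f).subtype Subtype.val_injective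
      (ksub_comap_me (f.subgroupComap C) h0 hn _ h)
    rw [← MonoidHom.range_eq_map, Subgroup.range_subtype] at this
    convert this
    have : (B.subgroupOf C).comap (f.subgroupComap C) = (B.comap f).subgroupOf (C.comap f) := rfl
    rw [this, Subgroup.subgroupOf_map_subtype]
    exact (inf_eq_left.2 (Subgroup.comap_mono hle)).symm

def X (k : ℕ) (G : Type*) [Group G] : Prop := ∀ H : Subgroup G, KSubmodularIn k H ⊤

theorem X.of_inj {U V : Type*} [Group U] [Group V] [Finite U] [Finite V] (f : U →* V)
    (hf : Function.Injective f) {k : ℕ} (h : X k V) : X k U := by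
  intro H
  have := ksub_comap f (h (H.map f))
  rwa [Subgroup.comap_map_eq_self_of_injective hf, Subgroup.comap_top] at this

theorem X.of_surj {U V : Type*} [Group U] [Group V] (f : U →* V)
    (hf : Function.Surjective f) {k : ℕ} (h : X k U) : X k V :=
  fun H => ksub_of_comap_surj f hf (h _)

/-- last proper step -/
theorem last_step {G : Type*} [Group G] {k : ℕ} {H : Subgroup G} (h : KSubmodularIn k H ⊤)
    (hH : H ≠ ⊤) : ∃ W, H ≤ W ∧ W ≠ ⊤ ∧ R k W ⊤ := by
  rw [ksub_iff] at h
  have : ∀ K, Relation.ReflTransGen (R k) H K → H ≠ K → ∃ W, H ≤ W ∧ W ≠ K ∧ R k W K := by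
    intro K hK
    induction hK with
    | refl => intro h; exact absurd rfl h
    | @tail B C h1 h2 ih =>
      intro hne
      by_cases hBC : B = C
      · subst hBC; exact ih hne
      · exact ⟨B, ksub_le h1, hBC, h2⟩
  exact this ⊤ h hH

theorem max_prime {n : ℕ} (h : 1 < n) :
    ∃ p, p.Prime ∧ p ∣ n ∧ ∀ q, q.Prime → q ∣ n → q ≤ p := by
  have hne : n.primeFactors.Nonempty := Nat.nonempty_primeFactors.2 h
  refine ⟨n.primeFactors.max' hne, ?_, ?_, ?_⟩
  · exact Nat.prime_of_mem_primeFactors (Finset.max'_mem _ hne)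
  · exact Nat.dvd_of_mem_primeFactors (Finset.max'_mem _ hne)
  · intro q hq hd
    exact Finset.le_max' _ _ (Nat.mem_primeFactors.2 ⟨hq, hd, by omega⟩)

theorem tower {k : ℕ} (s : ℕ) [hs : Fact s.Prime] : ∀ (m : ℕ) (G : Type) [Group G] [Finite G],
    Nat.card G = m → X k G → (∀ q, q.Prime → q ∣ Nat.card G → q ≤ s) →
    ∀ T : Sylow s G, (T : Subgroup G).Normal := by
  intro m
  induction m using Nat.strong_induction_on with
  | _ m ih =>
  intro G _ _ hm hX hmax T
  by_cases hT : (T : Subgroup G) = ⊤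
  · rw [hT]; infer_instance
  obtain ⟨W, hTW, hW, n, h0, hn, hR⟩ := last_step (hX T) hT
  have hlt : Nat.card W < m := by
    rw [← hm]
    exact lt_of_le_of_ne (Nat.le_of_dvd Nat.card_pos (Subgroup.card_subgroup_dvd_card W))
      fun h => hW (Subgroup.eq_top_of_card_eq _ h)
  have hn1 := ih _ hlt W rfl (hX.of_inj W.subtype Subtype.val_injective)
    (fun q hq hd => hmax q hq (hd.trans (Subgroup.card_subgroup_dvd_card W))) (T.subtype hTW)
  have hn2 : W ≤ Subgroup.normalizer ((T : Subgroup G) : Set G) := by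
    rw [← Subgroup.normal_subgroupOf_iff_le_normalizer hTW]
    exact hn1
  rw [← Subgroup.normalizer_eq_top_iff]
  rcases me_of_top W hR with h | ⟨p, q, hp, -, -, -, hi⟩
  · have := Sylow.normalizer_sup_eq_top (T.subtype hTW)
    have h2 : ((T.subtype hTW : Sylow s W) : Subgroup W).map W.subtype = T := by
      rw [Sylow.coe_subtype, Subgroup.subgroupOf_map_subtype, inf_eq_left.2 hTW]
    rw [h2] at this
    rwa [sup_eq_left.2 hn2] at this
  · rw [← Subgroup.index_eq_one]
    have hd := Subgroup.index_dvd_of_le hn2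
    rw [hi] at hd
    have hmod := card_sylow_modEq_one s G
    rw [Sylow.card_eq_index_normalizer T] at hmod
    rcases (Nat.dvd_prime hp).1 hd with h | h
    · exact h
    · exfalso
      replace hmod : (Subgroup.normalizer ((T : Subgroup G) : Set G)).index ≡ 1 [MOD s] := hmod
      rw [h] at hmod
      have hps : p ≤ s := hmax p hp (hi ▸ Subgroup.index_dvd_card W)
      have h1s := hs.out.one_lt
      have h1p := hp.one_lt
      unfold Nat.ModEq at hmod
      rw [Nat.mod_eq_of_lt h1s] at hmod
      rcases hps.lt_or_eq with h | h
      · rw [Nat.mod_eq_of_lt h] at hmod; omega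
      · rw [h, Nat.mod_self] at hmod; omega

theorem normal_of_sup {G : Type*} [Group G] {H N A : Subgroup G} [N.Normal] (h : H ⊔ N = ⊤)
    (h1 : ∀ g ∈ H, ∀ a ∈ A, g * a * g⁻¹ ∈ A) (h2 : ∀ g ∈ N, ∀ a ∈ A, g * a * g⁻¹ ∈ A) :
    A.Normal := by
  constructor
  intro a ha g
  have hg : g ∈ H ⊔ N := h ▸ Subgroup.mem_top g
  obtain ⟨x, hx, y, hy, rfl⟩ := Subgroup.mem_sup_of_normal_right.1 hg
  have := h1 x hx _ (h2 y hy a ha)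
  simpa [mul_assoc] using this

theorem inf_normal' {G : Type*} [Group G] {H N₁ N₂ : Subgroup G} [h1 : N₁.Normal] [h2 : N₂.Normal]
    (h : H ⊔ N₂ = ⊤) (hd : Disjoint N₁ N₂) : (H ⊓ N₁).Normal := by
  refine normal_of_sup h ?_ ?_
  · rintro g hg a ⟨ha, ha'⟩
    exact ⟨H.mul_mem (H.mul_mem hg ha) (H.inv_mem hg), h1.conj_mem _ ha' _⟩
  · rintro g hg a ⟨ha, ha'⟩
    have := Subgroup.commute_of_normal_of_disjoint _ _ h1 h2 hd a g ha' hg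
    rw [← this.eq]
    simpa using ⟨ha, ha'⟩

theorem ksub_of_proper {G : Type*} [Group G] {k : ℕ} {H K : Subgroup G} (hHK : H ≤ K)
    (hK : X k K) : KSubmodularIn k H K := by
  have := ksub_map_inj K.subtype Subtype.val_injective (hK (H.subgroupOf K))
  rwa [← MonoidHom.range_eq_map, Subgroup.range_subtype, Subgroup.subgroupOf_map_subtype,
    inf_eq_left.2 hHK] at this

theorem card_lt_of_lt {G : Type*} [Group G] [Finite G] {W : Subgroup G} (hW : W ≠ ⊤) :
    Nat.card W < Nat.card G :=
  lt_of_le_of_ne (Nat.le_of_dvd Nat.card_pos (Subgroup.card_subgroup_dvd_card W))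
      fun h => hW (Subgroup.eq_top_of_card_eq _ h)

def IH (k m : ℕ) : Prop := ∀ (G : Type) [Group G] [Finite G] (N₁ N₂ : Subgroup G)
  [N₁.Normal] [N₂.Normal], Nat.card G < m → N₁ ⊓ N₂ = ⊥ → X k (G ⧸ N₁) → X k (G ⧸ N₂) → X k G

theorem X.quot {G : Type*} [Group G] {k : ℕ} (N A : Subgroup G) [N.Normal] [A.Normal]
    (h : X k (G ⧸ N)) : X k ((G ⧸ A) ⧸ (N.map (QuotientGroup.mk' A))) := by
  refine h.of_surj (QuotientGroup.map N (N.map (QuotientGroup.mk' A)) (QuotientGroup.mk' A)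
    (Subgroup.le_comap_map _ _)) ?_
  intro x
  obtain ⟨y, rfl⟩ := QuotientGroup.mk_surjective x
  obtain ⟨z, rfl⟩ := QuotientGroup.mk_surjective y
  exact ⟨QuotientGroup.mk z, rfl⟩

theorem sub_X {k : ℕ} (G : Type) [Group G] [Finite G] (N₁ N₂ : Subgroup G)
    [N₁.Normal] [N₂.Normal] (ih : IH k (Nat.card G)) (hd : N₁ ⊓ N₂ = ⊥) (h1 : X k (G ⧸ N₁))
    (h2 : X k (G ⧸ N₂)) (K : Subgroup G) (hK : K ≠ ⊤) : X k K := by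
  have aux : ∀ (N : Subgroup G) [N.Normal], X k (G ⧸ N) → X k (K ⧸ (N.subgroupOf K)) := by
    intro N _ h
    refine h.of_inj (QuotientGroup.map (N.subgroupOf K) N K.subtype le_rfl) ?_
    rw [injective_iff_map_eq_one]
    intro x hx
    obtain ⟨y, rfl⟩ := QuotientGroup.mk_surjective x
    replace hx : (QuotientGroup.mk (y : G) : G ⧸ N) = 1 := hx
    rw [QuotientGroup.eq_one_iff] at hx
    rw [QuotientGroup.eq_one_iff]
    exact hx
  refine ih K (N₁.subgroupOf K) (N₂.subgroupOf K) (card_lt_of_lt hK) ?_ (aux _ h1) (aux _ h2)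
  rw [eq_bot_iff]
  rintro x ⟨hx1, hx2⟩
  have : (x : G) ∈ N₁ ⊓ N₂ := ⟨hx1, hx2⟩
  rw [hd, Subgroup.mem_bot] at this
  exact Subgroup.mem_bot.2 (Subtype.ext this)

theorem sup_top {k : ℕ} (G : Type) [Group G] [Finite G] (N₁ N₂ : Subgroup G)
    [N₁.Normal] [N₂.Normal] (ih : IH k (Nat.card G)) (hd : N₁ ⊓ N₂ = ⊥) (h1 : X k (G ⧸ N₁))
    (h2 : X k (G ⧸ N₂)) (H : Subgroup G) (hH : ¬ KSubmodularIn k H ⊤)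
    (A : Subgroup G) [A.Normal] (hA : A ≤ N₁) (hA' : A ≠ ⊥) : H ⊔ A = ⊤ := by
  by_contra hne
  apply hH
  refine ksub_trans (ksub_of_proper le_sup_left (sub_X G N₁ N₂ ih hd h1 h2 _ hne)) ?_
  have hX : X k (G ⧸ A) := by
    have hc : Nat.card (G ⧸ A) < Nat.card G := by
      have e := A.index_mul_card
      have h3 : 1 < Nat.card A := (Subgroup.one_lt_card_iff_ne_bot A).2 hA'
      have h4 : 0 < A.index := Nat.pos_of_ne_zero Subgroup.index_ne_zero_of_finite
      change A.index < _
      rw [← e]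
      exact lt_mul_of_one_lt_right h4 h3
    refine ih (G ⧸ A) (N₁.map (QuotientGroup.mk' A)) (N₂.map (QuotientGroup.mk' A)) hc ?_
      (h1.quot _ _) (h2.quot _ _)
    rw [eq_bot_iff]
    rintro _ ⟨⟨x, hx, rfl⟩, ⟨y, hy, hxy⟩⟩
    have h5 : y⁻¹ * x ∈ A := QuotientGroup.eq.1 hxy
    have h6 : y ∈ N₁ := by
      have := N₁.mul_mem hx (N₁.inv_mem (hA h5))
      simpa using this
    have h7 : y ∈ N₁ ⊓ N₂ := ⟨h6, hy⟩
    rw [hd, Subgroup.mem_bot] at h7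
    rw [← hxy, h7]
    simp
  have := ksub_comap_surj (QuotientGroup.mk' A) (QuotientGroup.mk'_surjective A)
    (hX (H.map (QuotientGroup.mk' A)))
  rwa [Subgroup.comap_top, Subgroup.comap_map_eq, QuotientGroup.ker_mk'] at this

/-- data of the minimal situation gives primary abelian -/
theorem min_abelian {k : ℕ} (G : Type) [Group G] [Finite G] (N : Subgroup G) [N.Normal]
    (hX : X k N) (hN : N ≠ ⊥) (hmin : ∀ A : Subgroup G, A.Normal → A ≤ N → A ≠ ⊥ → A = N) :
    ∃ r, r.Prime ∧ IsPGroup r N ∧ ∀ x ∈ N, ∀ y ∈ N, x * y = y * x := by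
  have h1 : 1 < Nat.card N := (Subgroup.one_lt_card_iff_ne_bot N).2 hN
  obtain ⟨r, hr, hrd, hmax⟩ := max_prime h1
  have := Fact.mk hr
  obtain ⟨T⟩ : Nonempty (Sylow r N) := inferInstance
  have hT := tower r _ N rfl hX hmax T
  have hTc := T.characteristic_of_normal hT
  have lift : ∀ B : Subgroup N, B.Characteristic → B ≠ ⊥ → B = ⊤ := by
    intro B hB hB'
    have h2 : (B.map N.subtype).Normal := inferInstance
    have h3 := hmin _ h2 (Subgroup.map_subtype_le B) (by
      rwa [Ne, Subgroup.map_eq_bot_iff_of_injective _ Subtype.val_injective])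
    apply Subgroup.map_injective (f := N.subtype) Subtype.val_injective
    rw [h3, ← MonoidHom.range_eq_map, Subgroup.range_subtype]
  have hTb : (T : Subgroup N) ≠ ⊥ := T.ne_bot_of_dvd_card hrd
  have hTt := lift _ hTc hTb
  have hp : IsPGroup r N := by
    have := T.isPGroup'
    rw [hTt] at this
    exact this.of_equiv Subgroup.topEquiv
  have : Nontrivial N := (Subgroup.nontrivial_iff_ne_bot N).2 hN
  have hc := lift (Subgroup.center N) inferInstance hp.bot_lt_center.ne'
  refine ⟨r, hr, hp, fun x hx y hy => ?_⟩
  have : (⟨y, hy⟩ : N) ∈ Subgroup.center N := hc ▸ Subgroup.mem_top _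
  exact congrArg Subtype.val (Subgroup.mem_center_iff.1 this ⟨x, hx⟩)

theorem final_step {k : ℕ} (G : Type) [Group G] [Finite G] (N H M T : Subgroup G) [N.Normal]
    (hsub : ∀ K : Subgroup G, K ≠ ⊤ → X k K)
    (hmin : ∀ A : Subgroup G, A.Normal → A ≤ N → A ≠ ⊥ → A = N)
    (hN : N ≠ ⊥)
    (hab : ∀ x ∈ N, ∀ y ∈ N, x * y = y * x)
    (hsup : H ⊔ N = ⊤) (hinf : H ⊓ N = ⊥)
    (hMH : M ≤ H) (hMne : M ≠ H) (hTH : T ≤ H) (hTN : ∀ t ∈ T, ∀ x ∈ N, t * x = x * t)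
    (hMT : ∀ h ∈ H, ∃ m ∈ M, ∃ t ∈ T, m * t = h) : KSubmodularIn k H ⊤ := by
  have dec : ∀ {x y : G}, x ∈ H → y ∈ N → x * y ∈ H → y = 1 := by
    intro x y hx hy hxy
    have : y ∈ H ⊓ N := ⟨by simpa using H.mul_mem (H.inv_mem hx) hxy, hy⟩
    rwa [hinf, Subgroup.mem_bot] at this
  set C := H ⊓ Subgroup.centralizer (N : Set G) with hC
  have hCc : ∀ {c x : G}, c ∈ C → x ∈ N → c * x = x * c := fun hc hx =>
    (Subgroup.mem_centralizer_iff.1 hc.2 _ hx).symm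
  have hCn : C.Normal := by
    refine normal_of_sup hsup ?_ ?_
    · rintro g hg a ⟨ha, ha'⟩
      exact ⟨H.mul_mem (H.mul_mem hg ha) (H.inv_mem hg),
        (inferInstance : (Subgroup.centralizer (N : Set G)).Normal).conj_mem _ ha' _⟩
    · rintro g hg a ha
      rw [← hCc ha hg]
      simpa using ha
  have hTC : T ≤ C := fun t ht => ⟨hTH ht, Subgroup.mem_centralizer_iff.2
    fun x hx => (hTN t ht x hx).symm⟩
  have hKne : M ⊔ N ≠ ⊤ := by
    intro h
    apply hMne
    refine le_antisymm hMH fun x hx => ?_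
    have : x ∈ M ⊔ N := h ▸ Subgroup.mem_top x
    obtain ⟨m, hm, y, hy, rfl⟩ := Subgroup.mem_sup_of_normal_right.1 this
    rw [dec (hMH hm) hy hx]
    simpa using hm
  have hX := hsub _ hKne
  have hMK : M.subgroupOf (M ⊔ N) ≠ ⊤ := by
    rw [Ne, Subgroup.subgroupOf_eq_top]
    intro h
    apply hN
    rw [eq_bot_iff, ← hinf]
    exact fun x hx => ⟨hMH (h (Subgroup.mem_sup_right hx)), hx⟩
  obtain ⟨W, hMW, hW, n, h0, hn, hR⟩ := last_step (hX (M.subgroupOf (M ⊔ N))) hMK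
  have hME := me_of_top _ hR
  -- W ∩ N is normal
  set W' := W.map (M ⊔ N).subtype with hW'
  have hMW' : M ≤ W' := fun m hm =>
    ⟨⟨m, Subgroup.mem_sup_left hm⟩, hMW (Subgroup.mem_subgroupOf.2 hm), rfl⟩
  have hWK : W' ≤ M ⊔ N := Subgroup.map_subtype_le W
  have hA : (W' ⊓ N).Normal := by
    refine normal_of_sup hsup ?_ ?_
    · rintro g hg a ⟨ha, ha'⟩
      obtain ⟨m, hm, t, ht, rfl⟩ := hMT g hg
      have e : m * t * a * (m * t)⁻¹ = m * a * m⁻¹ := by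
        rw [mul_assoc m t a, hTN t ht a ha']; group
      rw [e]
      exact ⟨W'.mul_mem (W'.mul_mem (hMW' hm) ha) (W'.inv_mem (hMW' hm)),
        (inferInstance : N.Normal).conj_mem _ ha' _⟩
    · rintro g hg a ⟨ha, ha'⟩
      rw [hab g hg a ha']
      simpa using ⟨ha, ha'⟩
  have hWN : W' ⊓ N = ⊥ := by
    by_contra h
    have := hmin _ hA inf_le_right h
    apply hW
    have h2 : M ⊔ N ≤ W' := sup_le hMW' (this ▸ inf_le_left)
    rw [eq_top_iff]
    intro x _
    obtain ⟨y, hy, hxy⟩ := h2 x.2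
    have : y = x := Subtype.ext hxy
    exact this ▸ hy
  have hWM : W = M.subgroupOf (M ⊔ N) := by
    refine le_antisymm (fun x hx => ?_) hMW
    obtain ⟨m, hm, y, hy, hxy⟩ := Subgroup.mem_sup_of_normal_right.1 x.2
    have hxW : (x : G) ∈ W' := ⟨x, hx, rfl⟩
    have : y ∈ W' ⊓ N := by
      refine ⟨?_, hy⟩
      rw [← hxy] at hxW
      simpa using W'.mul_mem (W'.inv_mem (hMW' hm)) hxW
    rw [hWN, Subgroup.mem_bot] at this
    rw [Subgroup.mem_subgroupOf, ← hxy, this]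
    simpa using hm
  rw [hWM] at hME
  let f : ↥(M ⊔ N) →* G ⧸ C := (QuotientGroup.mk' C).comp (M ⊔ N).subtype
  have hf : Function.Surjective f := by
    intro x
    obtain ⟨g, rfl⟩ := QuotientGroup.mk_surjective x
    have hg : g ∈ N ⊔ H := by rw [sup_comm, hsup]; exact Subgroup.mem_top g
    obtain ⟨y, hy, h, hh, rfl⟩ := Subgroup.mem_sup_of_normal_left.1 hg
    obtain ⟨m, hm, t, ht, rfl⟩ := hMT h hh
    refine ⟨⟨y * m, mul_mem (Subgroup.mem_sup_right hy) (Subgroup.mem_sup_left hm)⟩, ?_⟩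
    refine QuotientGroup.eq.2 ?_
    have : (y * m)⁻¹ * (y * (m * t)) = t := by group
    change (y * m)⁻¹ * (y * (m * t)) ∈ C
    rw [this]
    exact hTC ht
  have hcm : (H.map (QuotientGroup.mk' C)).comap (QuotientGroup.mk' C) = H := by
    apply Subgroup.comap_map_eq_self
    rw [QuotientGroup.ker_mk']
    exact inf_le_left
  have hcf : (H.map (QuotientGroup.mk' C)).comap f = M.subgroupOf (M ⊔ N) := by
    rw [← Subgroup.comap_comap, hcm]
    ext x
    change (x : G) ∈ H ↔ (x : G) ∈ M
    refine ⟨fun hx => ?_, fun hx => hMH hx⟩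
    obtain ⟨m, hm, y, hy, hxy⟩ := Subgroup.mem_sup_of_normal_right.1 x.2
    rw [← hxy] at hx ⊢
    rw [dec (hMH hm) hy hx]
    simpa using hm
  rw [← hcf, me_comap_surj f hf,
    ← me_comap_surj (QuotientGroup.mk' C) (QuotientGroup.mk'_surjective C), hcm] at hME
  exact ksub_iff.2 (.single (r_top h0 hn _ hME))

theorem relIndex_mul_card' {G : Type*} [Group G] (A B : Subgroup G) (h : A ≤ B) :
    A.relIndex B * Nat.card A = Nat.card B := by
  have := Subgroup.relIndex_mul_relIndex ⊥ A B bot_le h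
  rwa [Subgroup.relIndex_bot_left, Subgroup.relIndex_bot_left, mul_comm] at this

theorem fixed_ne_bot {G : Type*} [Group G] [Finite G] (N T : Subgroup G) [N.Normal] {r : ℕ}
    [Fact r.Prime] (hT : IsPGroup r T) (hN : r ∣ Nat.card N) :
    N ⊓ Subgroup.centralizer (T : Set G) ≠ ⊥ := by
  let _ : MulAction T N := MulAction.compHom N ((MulAut.conjNormal (H := N)).comp T.subtype)
  have hsm : ∀ (t : T) (x : N), ((t • x : N) : G) = t * x * (t : G)⁻¹ := fun t x =>
    MulAut.conjNormal_apply (t : G) x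
  have h1 : (1 : N) ∈ MulAction.fixedPoints T N := by
    intro t
    apply Subtype.ext
    rw [hsm]; simp
  obtain ⟨b, hb, hne⟩ := hT.exists_fixed_point_of_prime_dvd_card_of_fixed_point N hN h1
  intro h
  apply hne
  have : (b : G) ∈ N ⊓ Subgroup.centralizer (T : Set G) := by
    refine ⟨b.2, Subgroup.mem_centralizer_iff.2 fun t ht => ?_⟩
    have := congrArg Subtype.val (hb ⟨t, ht⟩)
    rw [hsm] at this
    exact mul_inv_eq_iff_eq_mul.1 this
  rw [h, Subgroup.mem_bot] at this
  exact Subtype.ext this.symm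

theorem coprime_case {k : ℕ} (G : Type) [Group G] [Finite G] (N T : Subgroup G) [hNn : N.Normal]
    {r s : ℕ} [hr : Fact r.Prime] [hs : Fact s.Prime] (hrs : r < s)
    (hT : IsPGroup s T) (hN : IsPGroup r N) (hX : X k ↥(T ⊔ N)) :
    ∀ t ∈ T, ∀ x ∈ N, t * x = x * t := by
  obtain ⟨a, ha⟩ := hN.exists_card_eq
  obtain ⟨b, hb⟩ := hT.exists_card_eq
  have hcard : Nat.card ↥(T ⊔ N) ∣ Nat.card T * Nat.card N := by
    rw [← relIndex_mul_card' N (T ⊔ N) le_sup_right, Subgroup.relIndex_sup_right]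
    exact Nat.mul_dvd_mul_right (Subgroup.relIndex_dvd_card _ _) _
  have hidx : (T.subgroupOf (T ⊔ N)).index ∣ Nat.card N := by
    rw [← relIndex_mul_card' T (T ⊔ N) le_sup_left, mul_comm] at hcard
    exact Nat.dvd_of_mul_dvd_mul_left Nat.card_pos hcard
  have hnd : ¬ s ∣ (T.subgroupOf (T ⊔ N)).index := by
    intro h
    have h1 := h.trans hidx
    rw [ha] at h1
    have := (Nat.prime_dvd_prime_iff_eq hs.out hr.out).1 (hs.out.dvd_of_dvd_pow h1)
    omega
  have hpg : IsPGroup s (T.subgroupOf (T ⊔ N)) :=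
    hT.of_equiv (Subgroup.subgroupOfEquivOfLe le_sup_left).symm
  have hn := tower s _ ↥(T ⊔ N) rfl hX (by
    intro q hq hd
    have h1 := hd.trans hcard
    rw [ha, hb] at h1
    rcases hq.dvd_mul.1 h1 with h | h
    · exact ((Nat.prime_dvd_prime_iff_eq hq hs.out).1 (hq.dvd_of_dvd_pow h)).le
    · exact ((Nat.prime_dvd_prime_iff_eq hq hr.out).1 (hq.dvd_of_dvd_pow h)).le.trans hrs.le)
    (hpg.toSylow hnd)
  have hn' : (T.subgroupOf (T ⊔ N)).Normal := hn
  have hdis : T ⊓ N = ⊥ := by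
    apply Subgroup.inf_eq_bot_of_coprime
    rw [ha, hb]
    exact Nat.Coprime.pow _ _ ((Nat.coprime_primes hs.out hr.out).2 (by omega))
  intro t ht x hx
  have h1 : x * t * x⁻¹ ∈ T := hn'.conj_mem ⟨t, Subgroup.mem_sup_left ht⟩ ht
    ⟨x, Subgroup.mem_sup_right hx⟩
  have h2 : x * t * x⁻¹ * t⁻¹ ∈ T ⊓ N := by
    refine ⟨T.mul_mem h1 (T.inv_mem ht), ?_⟩
    have := N.mul_mem hx (hNn.conj_mem _ (N.inv_mem hx) t)
    simpa [mul_assoc] using this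
  rw [hdis, Subgroup.mem_bot] at h2
  have h3 := mul_inv_eq_one.1 h2
  exact (mul_inv_eq_iff_eq_mul.1 h3).symm

theorem formation {k : ℕ} : ∀ (m : ℕ), IH k m := by
  intro m
  induction m with
  | zero => intro G _ _ _ _ _ _ h; omega
  | succ m ihm =>
  intro G _ _ N₁ N₂ hn1 hn2 hcm hd hX1 hX2
  have ih : IH k (Nat.card G) := fun G' _ _ A B _ _ hc => ihm G' A B (by omega)
  by_contra hcon
  obtain ⟨H, hH⟩ := not_forall.1 hcon
  have hHt : H ≠ ⊤ := fun h => hH (h ▸ ksub_refl _)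
  have hd' : N₂ ⊓ N₁ = ⊥ := by rw [inf_comm, hd]
  have hinj : ∀ (N : Subgroup G) [N.Normal], X k (G ⧸ N) → N ≠ ⊥ := by
    intro N _ h hb
    apply hcon
    refine h.of_inj (QuotientGroup.mk' N) ?_
    rw [← MonoidHom.ker_eq_bot_iff, QuotientGroup.ker_mk', hb]
  have hb1 := hinj N₁ hX1
  have hb2 := hinj N₂ hX2
  have hsub := sub_X G N₁ N₂ ih hd hX1 hX2
  have sup1 := sup_top G N₁ N₂ ih hd hX1 hX2 H hH
  have sup2 := sup_top G N₂ N₁ ih hd' hX2 hX1 H hH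
  have s1 : H ⊔ N₁ = ⊤ := sup1 N₁ le_rfl hb1
  have s2 : H ⊔ N₂ = ⊤ := sup2 N₂ le_rfl hb2
  have i1 : H ⊓ N₁ = ⊥ := by
    by_contra h
    have := inf_normal' s2 (disjoint_iff.2 hd)
    have := sup1 (H ⊓ N₁) inf_le_right h
    rw [sup_eq_left.2 inf_le_left] at this
    exact hHt this
  have i2 : H ⊓ N₂ = ⊥ := by
    by_contra h
    have := inf_normal' s1 (disjoint_iff.2 hd')
    have := sup2 (H ⊓ N₂) inf_le_right h
    rw [sup_eq_left.2 inf_le_left] at this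
    exact hHt this
  have hmin : ∀ A : Subgroup G, A.Normal → A ≤ N₁ → A ≠ ⊥ → A = N₁ := by
    intro A hA hle hne
    refine le_antisymm hle fun x hx => ?_
    have : x ∈ H ⊔ A := (sup1 A hle hne) ▸ Subgroup.mem_top x
    obtain ⟨h, hh, a, ha, rfl⟩ := Subgroup.mem_sup_of_normal_right.1 this
    have : h ∈ H ⊓ N₁ := ⟨hh, by simpa using N₁.mul_mem hx (N₁.inv_mem (hle ha))⟩
    rw [i1, Subgroup.mem_bot] at this
    simpa [this] using ha
  have hXN : X k N₁ := by
    refine hX2.of_inj ((QuotientGroup.mk' N₂).comp N₁.subtype) ?_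
    rw [injective_iff_map_eq_one]
    intro x hx
    have h1 : (x : G) ∈ N₁ ⊓ N₂ := ⟨x.2, (QuotientGroup.eq_one_iff _).1 hx⟩
    rw [hd, Subgroup.mem_bot] at h1
    exact Subtype.ext h1
  obtain ⟨r, hr, hNp, hab⟩ := min_abelian G N₁ hXN hb1 hmin
  have := Fact.mk hr
  -- cardinalities
  have hcompl : ∀ (N : Subgroup G) [N.Normal], H ⊔ N = ⊤ → H ⊓ N = ⊥ →
      Nat.card H * Nat.card N = Nat.card G := by
    intro N _ h1 h2
    refine (Subgroup.isComplement'_of_disjoint_and_mul_eq_univ (disjoint_iff.2 h2) ?_).card_mul_card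
    rw [← Subgroup.mul_normal, h1]; rfl
  have c1 := hcompl N₁ s1 i1
  have c2 := hcompl N₂ s2 i2
  have c3 : Nat.card N₂ = Nat.card N₁ :=
    Nat.eq_of_mul_eq_mul_left Nat.card_pos (c2.trans c1.symm)
  have hrN : r ∣ Nat.card N₁ := by
    have := (Subgroup.nontrivial_iff_ne_bot N₁).2 hb1
    obtain ⟨n, hn, e⟩ := hNp.nontrivial_iff_card.1 this
    rw [e]; exact dvd_pow_self _ hn.ne'
  have hrH : r ∣ Nat.card H := by
    have h1 : Nat.card H = N₁.index := by
      have := N₁.index_mul_card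
      rw [← c1] at this
      exact (Nat.eq_of_mul_eq_mul_right Nat.card_pos this).symm
    have h2 : Nat.card N₂ = N₁.relIndex N₂ := by
      rw [← Subgroup.inf_relIndex_right, hd, Subgroup.relIndex_bot_left]
    rw [h1]
    refine hrN.trans ?_
    rw [← c3, h2]
    exact Subgroup.relIndex_dvd_index_of_normal _ _
  have hXH : X k H := hsub H hHt
  have hcH : 1 < Nat.card H := hr.one_lt.trans_le (Nat.le_of_dvd Nat.card_pos hrH)
  obtain ⟨s, hs, hsd, hsmax⟩ := max_prime hcH
  have := Fact.mk hs
  have hrs : r ≤ s := hsmax r hr hrH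
  obtain ⟨T⟩ : Nonempty (Sylow s H) := inferInstance
  have hTn := tower s _ H rfl hXH hsmax T
  have hTb : (T : Subgroup H) ≠ ⊥ := T.ne_bot_of_dvd_card hsd
  obtain ⟨M, hM⟩ := Subgroup.exists_right_complement'_of_coprime T.card_coprime_index
  set T' := (T : Subgroup H).map H.subtype with hT'
  have hT'p : IsPGroup s T' := T.isPGroup'.map _
  have hT'H : T' ≤ H := Subgroup.map_subtype_le _
  have hTN : ∀ t ∈ T', ∀ x ∈ N₁, t * x = x * t := by
    rcases hrs.lt_or_eq with hlt | heq
    · refine coprime_case G N₁ T' hlt hT'p hNp (hsub _ ?_)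
      intro h
      have hTH : T' = H := by
        refine le_antisymm hT'H fun x hx => ?_
        have : x ∈ T' ⊔ N₁ := h ▸ Subgroup.mem_top x
        obtain ⟨t, ht, y, hy, rfl⟩ := Subgroup.mem_sup_of_normal_right.1 this
        have : y ∈ H ⊓ N₁ := ⟨by simpa using H.mul_mem (H.inv_mem (hT'H ht)) hx, hy⟩
        rw [i1, Subgroup.mem_bot] at this
        simpa [this] using ht
      obtain ⟨b, hb⟩ := hT'p.exists_card_eq
      rw [hTH] at hb
      rw [hb] at hrH
      have := (Nat.prime_dvd_prime_iff_eq hr hs).1 (hr.dvd_of_dvd_pow hrH)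
      omega
    · subst heq
      have h1 := fixed_ne_bot N₁ T' hT'p hrN
      have h2 : (N₁ ⊓ Subgroup.centralizer (T' : Set G)).Normal := by
        refine normal_of_sup s1 ?_ ?_
        · rintro g hg a ⟨ha, ha'⟩
          refine ⟨hn1.conj_mem _ ha _, Subgroup.mem_centralizer_iff.2 ?_⟩
          rintro _ ⟨t, ht, rfl⟩
          have h3 : g⁻¹ * (t : G) * g ∈ T' := by
            have := hTn.conj_mem t ht (⟨g, hg⟩⁻¹ : H)
            exact ⟨_, this, by simp⟩
          have h4 := Subgroup.mem_centralizer_iff.1 ha' _ h3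
          change (t : G) * (g * a * g⁻¹) = g * a * g⁻¹ * (t : G)
          calc (t : G) * (g * a * g⁻¹) = g * ((g⁻¹ * t * g) * a) * g⁻¹ := by group
            _ = g * (a * (g⁻¹ * t * g)) * g⁻¹ := by rw [h4]
            _ = _ := by group
        · rintro g hg a ha
          rw [hab g hg a ha.1]
          simpa using ha
      have h3 := hmin _ h2 inf_le_left h1
      intro t ht x hx
      rw [← h3] at hx
      exact Subgroup.mem_centralizer_iff.1 hx.2 t ht
  refine hH (final_step G N₁ H (M.map H.subtype) T' hsub hmin hb1 hab s1 i1
    (Subgroup.map_subtype_le _) ?_ hT'H hTN ?_)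
  · intro h
    have hMt : M = ⊤ := by
      apply Subgroup.map_injective (f := H.subtype) Subtype.val_injective
      rw [h, ← MonoidHom.range_eq_map, Subgroup.range_subtype]
    have := hM.disjoint
    rw [hMt, disjoint_top] at this
    exact hTb this
  · intro h hh
    have := hM.symm.sup_eq_top
    have h1 : (⟨h, hh⟩ : H) ∈ M ⊔ (T : Subgroup H) := this ▸ Subgroup.mem_top _
    obtain ⟨x, hx, y, hy, hxy⟩ := Subgroup.mem_sup_of_normal_right.1 h1
    exact ⟨x, ⟨x, hx, rfl⟩, y, ⟨y, hy, rfl⟩, congrArg Subtype.val hxy⟩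

end KSub

/-- Theorem 3(2): the class of finite groups all of whose subgroups are
`k`-submodular is a hereditary formation: closed under subgroups, quotients,
and subdirect products (quotients by intersections of two normal subgroups). -/
theorem kSubmodular_class_hereditary_formation (k : ℕ) (hk : 0 < k) :
    (∀ (G : Type) [Group G] [Finite G],
      (∀ H : Subgroup G, KSubmodularIn k H ⊤) →
        ∀ (U : Subgroup G) (H : Subgroup ↥U), KSubmodularIn k H ⊤) ∧
    (∀ (G : Type) [Group G] [Finite G],
      (∀ H : Subgroup G, KSubmodularIn k H ⊤) →
        ∀ (N : Subgroup G) [N.Normal],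
          ∀ H : Subgroup (G ⧸ N), KSubmodularIn k H ⊤) ∧
    (∀ (G : Type) [Group G] [Finite G] (N₁ N₂ : Subgroup G)
        [N₁.Normal] [N₂.Normal],
      (∀ H : Subgroup (G ⧸ N₁), KSubmodularIn k H ⊤) →
      (∀ H : Subgroup (G ⧸ N₂), KSubmodularIn k H ⊤) →
        ∀ H : Subgroup (G ⧸ (N₁ ⊓ N₂)), KSubmodularIn k H ⊤) := by
  refine ⟨?_, ?_, ?_⟩
  · intro G _ _ hX U
    exact KSub.X.of_inj U.subtype Subtype.val_injective hX
  · intro G _ _ hX N _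
    exact KSub.X.of_surj (QuotientGroup.mk' N) (QuotientGroup.mk'_surjective N) hX
  · intro G _ _ N₁ N₂ _ _ h1 h2
    refine KSub.formation _ (G ⧸ (N₁ ⊓ N₂)) (N₁.map (QuotientGroup.mk' (N₁ ⊓ N₂)))
      (N₂.map (QuotientGroup.mk' (N₁ ⊓ N₂))) (Nat.lt_succ_self _) ?_
      (KSub.X.quot _ _ h1) (KSub.X.quot _ _ h2)
    rw [eq_bot_iff]
    rintro _ ⟨⟨x, hx, rfl⟩, ⟨y, hy, hxy⟩⟩
    have h5 : y⁻¹ * x ∈ N₁ ⊓ N₂ := QuotientGroup.eq.1 hxy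
    have h6 : x ∈ N₂ := by
      have := N₂.mul_mem hy h5.2
      simpa using this
    exact Subgroup.mem_bot.2 ((QuotientGroup.eq_one_iff x).2 ⟨hx, h6⟩)
end

section
/- Let G = AB be a finite group that is the product of nilpotent subgroups A and B. If A and B are both k-submodular in G, then G is supersoluble and every Sylow subgroup of G is k-submodular in G. -/
open Pointwise

/-- A group is supersolvable if it has a normal series with cyclic factors
(for finite groups this is equivalent to having a chief series all of whose
factors are cyclic of prime order). -/
def IsSupersolvable (G : Type*) [Group G] : Prop :=
  ∃ (m : ℕ) (c : ℕ → Subgroup G), c 0 = ⊥ ∧ c m = ⊤ ∧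
    (∀ i, (c i).Normal) ∧ (∀ i, i < m → c i ≤ c (i + 1)) ∧
    ∀ i, i < m → ∀ [_h : ((c i).subgroupOf (c (i + 1))).Normal],
      IsCyclic (↥(c (i + 1)) ⧸ (c i).subgroupOf (c (i + 1)))


theorem aux_cocycle {N H : Type*} [CommGroup N] [Finite N] [Group H] [Finite H]
    (φ : H →* MulAut N) (hco : (Nat.card N).Coprime (Nat.card H)) (f : H → N)
    (hf : ∀ g h, f (g * h) = f g * φ g (f h)) :
    ∃ n : N, ∀ g, f g = n * (φ g n)⁻¹ := by
  have := Fintype.ofFinite H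
  set m := Nat.card H with hm
  set c := ∏ h, f h with hc
  have inj : Function.Injective (fun x : N => x ^ m) := (powCoprime hco).injective
  obtain ⟨n, hn⟩ := (powCoprime hco).surjective c
  have hn' : n ^ m = c := hn
  refine ⟨n, fun g => inj ?_⟩
  have h1 : c = f g ^ m * φ g c := by
    calc c = ∏ h, f (g * h) := (Fintype.prod_equiv (Equiv.mulLeft g) _ _ (fun _ => rfl)).symm
      _ = ∏ h, (f g * φ g (f h)) := by simp only [hf]
      _ = _ := by
        rw [Finset.prod_mul_distrib, Finset.prod_const, hc, map_prod, Finset.card_univ, hm,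
          Nat.card_eq_fintype_card]
  change f g ^ m = (n * (φ g n)⁻¹) ^ m
  rw [mul_pow, inv_pow, ← map_pow, hn', eq_mul_inv_iff_mul_eq, ← h1]

theorem aux_module {N K : Type*} [CommGroup N] [Finite N] [Group K] [Finite K]
    (φ : K →* MulAut N) (hco : (Nat.card N).Coprime (Nat.card K)) (A B : Subgroup K)
    (hAB : ∀ k : K, ∃ a ∈ A, ∃ b ∈ B, k = a * b)
    (hN : ∀ x : N, ∃ u v, (∀ a ∈ A, φ a u = u) ∧ (∀ b ∈ B, φ b v = v) ∧ x = u * v)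
    (hfix : ∀ x : N, (∀ k, φ k x = x) → x = 1)
    (a : K) (ha : a ∈ A) (y : N) (hy : ∀ b ∈ B, φ b y = y) : ∀ b ∈ B, φ b (φ a y) = φ a y := by
  have := Fintype.ofFinite K
  have := Fintype.ofFinite A
  let T : N →* N := 
    { toFun := fun x => ∏ a : A, φ a x
      map_one' := by simp
      map_mul' := by intro x y; simp [Finset.prod_mul_distrib] }
  have hT : ∀ x, T x = ∏ a : A, φ a x := fun _ => rfl
  have hTa : ∀ a ∈ A, ∀ x, T (φ a x) = T x := by
    intro a ha x
    rw [hT, hT]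
    refine Fintype.prod_equiv (Equiv.mulRight (⟨a, ha⟩ : A)) _ _ (fun b => ?_)
    simp
  have hTB : ∀ v, (∀ b ∈ B, φ b v = v) → T v = 1 := by
    intro v hv
    have h1 : (∏ k, φ k v) = 1 := by
      apply hfix
      intro g
      rw [map_prod]
      refine Fintype.prod_equiv (Equiv.mulLeft g) _ _ (fun b => ?_)
      simp
    have h2 : T (∏ k, φ k v) = T v ^ Nat.card K := by
      rw [map_prod, Nat.card_eq_fintype_card, ← Finset.card_univ, ← Finset.prod_const]
      refine Finset.prod_congr rfl (fun k _ => ?_)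
      obtain ⟨a, ha, b, hb, rfl⟩ := hAB k
      rw [map_mul, MulAut.mul_apply, hv b hb, hTa a ha]
    rw [h1, map_one] at h2
    apply (powCoprime hco).injective
    simpa using h2.symm
  obtain ⟨u, v, hu, hv, huv⟩ := hN (φ a y)
  have hcoA : (Nat.card N).Coprime (Nat.card A) :=
    Nat.Coprime.coprime_dvd_right (Subgroup.card_subgroup_dvd_card A) hco
  have h3 : T u = u ^ Nat.card A := by
    rw [hT, Nat.card_eq_fintype_card, ← Finset.card_univ, ← Finset.prod_const]
    exact Finset.prod_congr rfl (fun k _ => hu k k.2)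
  have h4 : T (φ a y) = 1 := by rw [hTa a ha, hTB y hy]
  rw [huv, map_mul, hTB v hv, mul_one, h3] at h4
  have h5 : u = 1 := by
    apply (powCoprime hcoA).injective
    simpa using h4
  rw [huv, h5, one_mul]
  exact hv

theorem aux_nilp_commute {G : Type*} [Group G] [Finite G] [Group.IsNilpotent G] (x y : G)
    (h : (orderOf x).Coprime (orderOf y)) : Commute x y := by
  have hne : Nonempty (((p : ↥(Nat.card G).primeFactors) → (P : Sylow (↑p) G) → ↥(P : Subgroup G)) ≃* G) :=
    ((Group.isNilpotent_of_finite_tfae (G := G)).out 0 4).1 ‹_›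
  obtain ⟨e⟩ := hne
  suffices hh : Commute (e.symm x) (e.symm y) by
    have := hh.map e.toMonoidHom
    simpa using this
  have hx : orderOf (e.symm x) = orderOf x := e.symm.orderOf_eq x
  have hy : orderOf (e.symm y) = orderOf y := e.symm.orderOf_eq y
  rw [← hx, ← hy] at h
  generalize e.symm x = x' at *
  generalize e.symm y = y' at *
  funext p P
  have hp : Fact (p : ℕ).Prime := ⟨Nat.prime_of_mem_primeFactors p.2⟩
  have h1 : orderOf (x' p P) ∣ orderOf x' := 
    orderOf_dvd_of_pow_eq_one (by rw [← Pi.pow_apply, ← Pi.pow_apply, pow_orderOf_eq_one]; rfl)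
  have h2 : orderOf (y' p P) ∣ orderOf y' := 
    orderOf_dvd_of_pow_eq_one (by rw [← Pi.pow_apply, ← Pi.pow_apply, pow_orderOf_eq_one]; rfl)
  have h3 := Nat.Coprime.of_dvd h1 h2 h
  obtain ⟨i, hi⟩ := (IsPGroup.iff_orderOf.1 P.2) (x' p P)
  obtain ⟨j, hj⟩ := (IsPGroup.iff_orderOf.1 P.2) (y' p P)
  rw [hi, hj] at h3
  have : i = 0 ∨ j = 0 := by
    by_contra! hc
    exact hp.1.one_lt.ne' (Nat.Coprime.eq_one_of_dvd 
      (Nat.Coprime.of_dvd (dvd_pow_self _ hc.1) (dvd_pow_self _ hc.2) h3) dvd_rfl)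
  rcases this with h | h
  · subst h
    have : x' p P = 1 := orderOf_eq_one_iff.1 (by simpa using hi)
    simp [this]
  · subst h
    have : y' p P = 1 := orderOf_eq_one_iff.1 (by simpa using hj)
    simp [this]

theorem aux_conj_abelian {G : Type*} [Group G] [Finite G] (Z K A : Subgroup G) [Z.Normal]
    (hZ : ∀ x ∈ Z, ∀ y ∈ Z, x * y = y * x) (hco : (Nat.card Z).Coprime (Nat.card A))
    (hd : Z ⊓ K = ⊥) (hA : A ≤ Z ⊔ K) : ∃ n ∈ Z, ∀ a ∈ A, n⁻¹ * a * n ∈ K := by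
  let _ : CommGroup Z := { (inferInstance : Group Z) with
    mul_comm := fun x y => Subtype.ext (hZ x x.2 y y.2) }
  have h1 : ∀ a : A, ∃ z : Z, (z : G)⁻¹ * a ∈ K := by
    intro a
    obtain ⟨z, hz, k, hk, h⟩ := Subgroup.mem_sup_of_normal_left.1 (hA a.2)
    refine ⟨⟨z, hz⟩, ?_⟩
    rw [← h]
    simpa using hk
  choose f hf using h1
  let φ : A →* MulAut Z := MulAut.conjNormal.comp A.subtype
  have hφ : ∀ (a : A) (z : Z), ((φ a z : Z) : G) = a * z * (a : G)⁻¹ := fun a z => rfl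
  obtain ⟨n, hn⟩ := aux_cocycle φ hco f (by
    intro g h
    have e1 := hf (g * h)
    have e2 := hf g
    have e3 := hf h
    have e4 := K.mul_mem (K.mul_mem e2 e3) (K.inv_mem e1)
    have e5 : ((f g : G)⁻¹ * g * ((f h : G)⁻¹ * h) * ((f (g * h) : G)⁻¹ * ((g * h : A) : G))⁻¹)
      = ((f g : G)⁻¹ * ((φ g (f h) : Z) : G)⁻¹ * f (g * h)) := by
      rw [hφ]; push_cast; group
    rw [e5] at e4
    have e6 : ((f g : G)⁻¹ * ((φ g (f h) : Z) : G)⁻¹ * f (g * h)) ∈ Z ⊓ K :=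
      ⟨Z.mul_mem (Z.mul_mem (Z.inv_mem (f g).2) (Z.inv_mem (φ g (f h)).2)) (f (g*h)).2, e4⟩
    rw [hd, Subgroup.mem_bot] at e6
    have e7 : (f g)⁻¹ * (φ g (f h))⁻¹ * f (g * h) = 1 := Subtype.ext e6
    rw [← mul_inv, mul_comm, mul_inv_eq_one] at e7
    exact e7)
  refine ⟨n, n.2, fun a ha => ?_⟩
  have e1 := hf ⟨a, ha⟩
  rw [hn, mul_comm n] at e1
  push_cast at e1
  rw [hφ] at e1
  convert e1 using 1
  group

theorem aux_conj (p : ℕ) [Fact p.Prime] (n : ℕ) : ∀ {G : Type*} [Group G] [Finite G]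
    (P K A : Subgroup G) [P.Normal], Nat.card G = n → 
    IsPGroup p P → p.Coprime (Nat.card K) → p.Coprime (Nat.card A) → A ≤ P ⊔ K →
    ∃ g : G, ∀ a ∈ A, g⁻¹ * a * g ∈ K := by
  induction n using Nat.strong_induction_on with
  | _ n ih =>
  intro G _ _ P K A _ hn hP hK hA hAP
  by_cases hP1 : P = ⊥
  · subst hP1
    refine ⟨1, fun a ha => ?_⟩
    simpa using hAP ha
  have hnt : Nontrivial P := (Subgroup.nontrivial_iff_ne_bot P).2 hP1
  have hc := hP.center_nontrivial
  set Z : Subgroup G := (Subgroup.center P).map P.subtype with hZdef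
  have hZn : Z.Normal := inferInstance
  have hZP : Z ≤ P := Subgroup.map_subtype_le _
  have hZc : ∀ x ∈ Z, ∀ y ∈ P, x * y = y * x := by
    rintro _ ⟨x, hx, rfl⟩ y hy
    have := (Subgroup.mem_center_iff.1 hx) ⟨y, hy⟩
    exact (congrArg Subtype.val this).symm
  have hZ1 : Z ≠ ⊥ := by
    intro h
    rw [hZdef, Subgroup.map_eq_bot_iff_of_injective _ P.subtype_injective] at h
    exact (Subgroup.nontrivial_iff_ne_bot _).1 hc h
  have hZp : IsPGroup p Z := hP.to_le hZP
  obtain ⟨i, hi⟩ := IsPGroup.iff_card.1 hZp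
  have hcard : Nat.card (G ⧸ Z) < n := by
    rw [← hn, ← Subgroup.index_eq_card, ← Subgroup.card_mul_index Z]
    have : 1 < Nat.card Z := (Subgroup.one_lt_card_iff_ne_bot Z).2 hZ1
    have : 0 < Z.index := Nat.pos_of_ne_zero Subgroup.index_ne_zero_of_finite
    nlinarith
  let π := QuotientGroup.mk' Z
  have hπ : Function.Surjective π := QuotientGroup.mk'_surjective Z
  have : (P.map π).Normal := Subgroup.Normal.map inferInstance π hπ
  obtain ⟨g', hg'⟩ := ih _ hcard (P.map π) (K.map π) (A.map π) rfl (hP.map π)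
    (hK.coprime_dvd_right (Subgroup.card_map_dvd _ _)) (hA.coprime_dvd_right (Subgroup.card_map_dvd _ _))
    (by rw [← Subgroup.map_sup]; exact Subgroup.map_mono hAP)
  obtain ⟨g, rfl⟩ := hπ g'
  let A' := A.map (MulAut.conj g⁻¹).toMonoidHom
  have hA' : ∀ a ∈ A, g⁻¹ * a * g ∈ A' := fun a ha => ⟨a, ha, by simp⟩
  obtain ⟨n, hn, hn2⟩ := aux_conj_abelian Z K A' (fun x hx y hy => hZc x hx y (hZP hy))
    (by rw [hi]
        exact (Nat.Coprime.pow_left _ hA).coprime_dvd_right (Subgroup.card_map_dvd _ _))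
    (Subgroup.disjoint_of_coprime_natCard (by rw [hi]; exact (Nat.Coprime.pow_left _ hK))).eq_bot
    (by
      rintro _ ⟨a, ha, rfl⟩
      have := hg' (π a) ⟨a, ha, rfl⟩
      rw [← map_inv, ← map_mul, ← map_mul] at this
      have h2 : g⁻¹ * a * g ∈ (K.map π).comap π := this
      rw [Subgroup.comap_map_eq, QuotientGroup.ker_mk', sup_comm] at h2
      simpa using h2)
  refine ⟨g * n, fun a ha => ?_⟩
  have := hn2 _ (hA' a ha)
  convert this using 1
  group

def AuxEmb {K : Type*} [Group K] (n : ℕ) (H : Subgroup K) : Prop :=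
  H.Normal ∨ ∃ p q : ℕ, p.Prime ∧ q.Prime ∧
      ¬ Group.IsNilpotent (K ⧸ H.normalCore) ∧
      Nat.card (K ⧸ H.normalCore) = p * q ^ n ∧ H.index = p

theorem aux_core_comap {K K' : Type*} [Group K] [Group K'] (f : K →* K')
    (hf : Function.Surjective f) (H : Subgroup K') :
    (H.comap f).normalCore = H.normalCore.comap f := by
  ext x
  constructor
  · intro hx b
    obtain ⟨b, rfl⟩ := hf b
    have := hx b
    simpa using this
  · intro hx b
    have := hx (f b)
    simpa using this

theorem aux_emb_comap {K K' : Type*} [Group K] [Group K'] (f : K →* K')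
    (hf : Function.Surjective f) (n : ℕ) (H : Subgroup K') :
    AuxEmb n (H.comap f) ↔ AuxEmb n H := by
  have hg : Function.Surjective ((QuotientGroup.mk' H.normalCore).comp f) :=
    (QuotientGroup.mk'_surjective _).comp hf
  have hk : (H.comap f).normalCore = ((QuotientGroup.mk' H.normalCore).comp f).ker := by
    rw [aux_core_comap f hf, ← MonoidHom.comap_ker, QuotientGroup.ker_mk']
  let e : K ⧸ (H.comap f).normalCore ≃* K' ⧸ H.normalCore :=
    (QuotientGroup.quotientMulEquivOfEq hk).trans
      (QuotientGroup.quotientKerEquivOfSurjective _ hg)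
  have h1 : (H.comap f).Normal ↔ H.Normal := by
    constructor
    · intro h
      have := Subgroup.Normal.map h f hf
      rwa [Subgroup.map_comap_eq_self_of_surjective hf] at this
    · intro h; infer_instance
  have h2 : Group.IsNilpotent (K ⧸ (H.comap f).normalCore) ↔ 
      Group.IsNilpotent (K' ⧸ H.normalCore) :=
    ⟨fun h => Group.nilpotent_of_mulEquiv e, fun h => Group.nilpotent_of_mulEquiv e.symm⟩
  have h3 : Nat.card (K ⧸ (H.comap f).normalCore) = Nat.card (K' ⧸ H.normalCore) :=
    Nat.card_congr e.toEquiv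
  have h4 : (H.comap f).index = H.index := Subgroup.index_comap_of_surjective _ hf
  unfold AuxEmb
  rw [h1, h2, h3, h4]

theorem aux_me_iff {G : Type*} [Group G] (n : ℕ) (H K : Subgroup G) :
    ModularlyEmbedded n H K ↔ H ≤ K ∧ AuxEmb n (H.subgroupOf K) := Iff.rfl

theorem aux_me_comap {G G' : Type*} [Group G] [Group G'] (f : G →* G')
    (hf : Function.Surjective f) (n : ℕ) (H K : Subgroup G') (h : ModularlyEmbedded n H K) :
    ModularlyEmbedded n (H.comap f) (K.comap f) := by
  rw [aux_me_iff] at *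
  refine ⟨Subgroup.comap_mono h.1, ?_⟩
  have h2 := (aux_emb_comap (f.subgroupComap K) (f.subgroupComap_surjective_of_surjective K hf) n
    (H.subgroupOf K)).2 h.2
  exact h2

theorem aux_me_map {G G' : Type*} [Group G] [Group G'] (f : G →* G')
    (n : ℕ) (H K : Subgroup G) (h : ModularlyEmbedded n H K) :
    ModularlyEmbedded n (H.map f) (K.map f) := by
  refine ⟨Subgroup.map_mono h.1, ?_⟩
  have hs := f.subgroupMap_surjective K
  have key : ((H.map f).subgroupOf (K.map f)) = (H.subgroupOf K).map (f.subgroupMap K) := by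
    ext ⟨x, hx⟩
    simp only [Subgroup.mem_subgroupOf, Subgroup.mem_map]
    constructor
    · rintro ⟨y, hy, rfl⟩
      exact ⟨⟨y, h.1 hy⟩, hy, rfl⟩
    · rintro ⟨y, hy, hyx⟩
      exact ⟨y, hy, congrArg Subtype.val hyx⟩
  change AuxEmb n _
  rw [key]
  rcases h.2 with hn | hn
  · exact Or.inl (Subgroup.Normal.map hn _ hs)
  · obtain ⟨p, q, hp, hq, h1, h2, h3⟩ := hn
    by_cases hk : (f.subgroupMap K).ker ≤ H.subgroupOf K
    · rw [← aux_emb_comap _ hs, Subgroup.comap_map_eq_self hk]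
      exact h.2
    · left
      have h4 : H.subgroupOf K < H.subgroupOf K ⊔ (f.subgroupMap K).ker := by
        refine lt_of_le_of_ne le_sup_left (fun h => hk ?_)
        rw [h]; exact le_sup_right
      have h5 : H.subgroupOf K ⊔ (f.subgroupMap K).ker = ⊤ := by
        have h6 := Subgroup.relIndex_mul_index h4.le
        rw [h3] at h6
        rcases (Nat.dvd_prime hp).1 (Dvd.intro _ h6) with h7 | h7
        · exact absurd (Subgroup.relIndex_eq_one.1 h7) (not_le_of_gt h4)
        · rw [h7] at h6
          exact Subgroup.index_eq_one.1 (Nat.eq_of_mul_eq_mul_left hp.pos (by simpa using h6))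
      have h6 : (H.subgroupOf K).map (f.subgroupMap K) = ⊤ := by
        rw [← Subgroup.map_comap_eq_self_of_surjective hs ((H.subgroupOf K).map (f.subgroupMap K)),
          Subgroup.comap_map_eq, h5, Subgroup.map_top_of_surjective _ hs]
      rw [h6]
      infer_instance

theorem aux_ks_map {G G' : Type*} [Group G] [Group G'] (f : G →* G')
    (k : ℕ) (H K : Subgroup G) (h : KSubmodularIn k H K) :
    KSubmodularIn k (H.map f) (K.map f) := by
  obtain ⟨m, c, h0, hm, hc⟩ := h
  refine ⟨m, fun i => (c i).map f, by rw [← h0], by rw [← hm], fun i hi => ?_⟩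
  obtain ⟨n, hn, hnk, hme⟩ := hc i hi
  exact ⟨n, hn, hnk, aux_me_map f n _ _ hme⟩

theorem aux_ks_comap {G G' : Type*} [Group G] [Group G'] (f : G →* G')
    (hf : Function.Surjective f)
    (k : ℕ) (H K : Subgroup G') (h : KSubmodularIn k H K) :
    KSubmodularIn k (H.comap f) (K.comap f) := by
  obtain ⟨m, c, h0, hm, hc⟩ := h
  refine ⟨m, fun i => (c i).comap f, by rw [← h0], by rw [← hm], fun i hi => ?_⟩
  obtain ⟨n, hn, hnk, hme⟩ := hc i hi
  exact ⟨n, hn, hnk, aux_me_comap f hf n _ _ hme⟩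

theorem aux_ks_cons {G : Type*} [Group G] {k : ℕ} {H L K : Subgroup G} {n : ℕ} (hn : 0 < n)
    (hnk : n ≤ k) (h : ModularlyEmbedded n H L) (h2 : KSubmodularIn k L K) :
    KSubmodularIn k H K := by
  obtain ⟨m, c, h0, hm, hc⟩ := h2
  refine ⟨m + 1, fun i => Nat.casesOn i H c, rfl, hm, fun i hi => ?_⟩
  cases i with
  | zero => exact ⟨n, hn, hnk, by simpa [h0] using h⟩
  | succ i => exact hc i (by omega)

theorem aux_normal_of_nilp {L : Type*} [Group L] [Finite L] (H : Subgroup L) (p : ℕ)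
    (hp : p.Prime) (hi : H.index = p) (h : Group.IsNilpotent (L ⧸ H.normalCore)) : H.Normal := by
  let π := QuotientGroup.mk' H.normalCore
  have hπ : Function.Surjective π := QuotientGroup.mk'_surjective _
  have hker : π.ker ≤ H := by rw [QuotientGroup.ker_mk']; exact H.normalCore_le
  have hi2 : (H.map π).index = p := by rw [Subgroup.index_map_eq _ hπ hker, hi]
  have hnc := Group.normalizerCondition_of_isNilpotent (G := L ⧸ H.normalCore)
  have hlt : H.map π < Subgroup.normalizer (H.map π) := hnc _ (by
    rw [lt_top_iff_ne_top]
    intro h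
    rw [h, Subgroup.index_top] at hi2
    exact hp.one_lt.ne hi2)
  have htop : Subgroup.normalizer (H.map π : Set (L ⧸ H.normalCore)) = ⊤ := by
    have h6 := Subgroup.relIndex_mul_index hlt.le
    rw [hi2] at h6
    rcases (Nat.dvd_prime hp).1 (Dvd.intro _ h6) with h7 | h7
    · exact absurd (Subgroup.relIndex_eq_one.1 h7) (not_le_of_gt hlt)
    · rw [h7] at h6
      exact Subgroup.index_eq_one.1 (Nat.eq_of_mul_eq_mul_left hp.pos (by simpa using h6))
  have hn : (H.map π).Normal := Subgroup.normalizer_eq_top_iff.1 htop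
  have := hn.comap π
  rwa [Subgroup.comap_map_eq_self hker] at this

theorem aux_step {G : Type*} [Group G] [Finite G] {k : ℕ} (hk : 0 < k) (N H : Subgroup G)
    [N.Normal] (p q m : ℕ) (hp : p.Prime) (hq : q.Prime) (hN : Nat.card N = p) (hm : m ≤ k)
    (hC : (Subgroup.centralizer (N : Set G)).index = q ^ m) :
    ∃ n, 0 < n ∧ n ≤ k ∧ ModularlyEmbedded n H (H ⊔ N) := by
  set L := H ⊔ N with hL
  have hHL : H ≤ L := le_sup_left
  have hNL : N ≤ L := le_sup_right
  by_cases hnorm : (H.subgroupOf L).Normal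
  · exact ⟨1, one_pos, hk, hHL, Or.inl hnorm⟩
  have hNH : ¬ N ≤ H := by
    intro h
    apply hnorm
    have : L = H := by rw [hL]; exact sup_eq_left.2 h
    rw [this, Subgroup.subgroupOf_self]
    infer_instance
  have hd : N ⊓ H = ⊥ := by
    have h1 : Nat.card (N ⊓ H : Subgroup G) ∣ p := hN ▸ Subgroup.card_dvd_of_le inf_le_left
    rcases (Nat.dvd_prime hp).1 h1 with h | h
    · exact Subgroup.card_eq_one.1 h
    · exfalso
      apply hNH
      have : N ⊓ H = N := Subgroup.eq_of_le_of_card_ge inf_le_left (by rw [h, hN])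
      exact inf_eq_left.1 this
  have hidx : (H.subgroupOf L).index = p := by
    have h1 : Nat.card L * Nat.card (N ⊓ H : Subgroup G) = Nat.card N * Nat.card H := by
      have e1 : N.relIndex L = N.relIndex H := Subgroup.relIndex_sup_right H N
      have e2 : N.relIndex L * Nat.card N = Nat.card L := by
        rw [← Subgroup.relIndex_bot_left, ← Subgroup.relIndex_bot_left, mul_comm]
        exact Subgroup.relIndex_mul_relIndex _ _ _ bot_le hNL
      have e3 : N.relIndex H * Nat.card (N ⊓ H : Subgroup G) = Nat.card H := by
        rw [← Subgroup.inf_relIndex_right, ← Subgroup.relIndex_bot_left, 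
          ← Subgroup.relIndex_bot_left, mul_comm]
        exact Subgroup.relIndex_mul_relIndex _ _ _ bot_le inf_le_right
      rw [← e2, ← e3, e1]; ring
    have h2 : Nat.card H * H.relIndex L = Nat.card L := by
      rw [← Subgroup.relIndex_bot_left, ← Subgroup.relIndex_bot_left]
      exact Subgroup.relIndex_mul_relIndex _ _ _ bot_le hHL
    rw [hd, Subgroup.card_bot, mul_one, ← h2, mul_comm (Nat.card N), hN] at h1
    exact Nat.eq_of_mul_eq_mul_left Nat.card_pos h1
  set C := Subgroup.centralizer (N : Set G) with hCdef
  have hcore : (H.subgroupOf L).normalCore = (C ⊓ H).subgroupOf L := by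
    apply le_antisymm
    · intro x hx
      refine ⟨?_, Subgroup.normalCore_le (H.subgroupOf L) hx⟩
      change (x : G) ∈ C
      rw [hCdef, Subgroup.mem_centralizer_iff]
      intro n hn
      have hcm := Subgroup.commute_of_normal_of_disjoint (H.subgroupOf L).normalCore
        (N.subgroupOf L) inferInstance inferInstance (by
          rw [disjoint_iff_inf_le]
          rintro y ⟨hy1, hy2⟩
          have : (y : G) ∈ N ⊓ H := ⟨hy2, Subgroup.normalCore_le (H.subgroupOf L) hy1⟩
          rw [hd] at this
          exact Subtype.ext this) x ⟨n, hNL hn⟩ hx hn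
      exact (congrArg Subtype.val hcm.eq).symm
    · have hn : ((C ⊓ H).subgroupOf L).Normal := by
        rw [Subgroup.normal_subgroupOf_iff_le_normalizer (inf_le_right.trans hHL), hL, sup_le_iff]
        constructor
        · have : C.Normal := inferInstance
          intro h hh
          rw [Subgroup.mem_normalizer_iff]
          intro x
          constructor
          · rintro ⟨h1, h2⟩
            exact ⟨this.conj_mem _ h1 _, H.mul_mem (H.mul_mem hh h2) (H.inv_mem hh)⟩
          · rintro ⟨h1, h2⟩
            refine ⟨?_, ?_⟩
            · have := this.conj_mem _ h1 h⁻¹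
              simpa [mul_assoc] using this
            · have := H.mul_mem (H.mul_mem (H.inv_mem hh) h2) hh
              simpa [mul_assoc] using this
        · intro n hn
          rw [Subgroup.mem_normalizer_iff]
          intro x
          have key : ∀ y ∈ C, ∀ n ∈ N, n * y * n⁻¹ = y := by
            intro y hy n hn
            rw [hCdef, Subgroup.mem_centralizer_iff] at hy
            rw [hy n hn]; group
          constructor
          · intro hx
            rw [key x hx.1 n hn]; exact hx
          · intro hx
            have := key _ hx.1 n⁻¹ (N.inv_mem hn)
            have h2 : x = n * x * n⁻¹ := by rw [← this]; group
            rw [h2]; exact hx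
      exact Subgroup.normal_le_normalCore.2 (Subgroup.comap_mono inf_le_right)
  have hrel : ∃ j ≤ m, C.relIndex H = q ^ j := (Nat.dvd_prime_pow hq).1 (hC ▸ Subgroup.relIndex_dvd_index_of_normal C H)
  obtain ⟨j, hj, hj2⟩ := hrel
  have hcardq : Nat.card (L ⧸ (H.subgroupOf L).normalCore) = p * q ^ j := by
    rw [hcore, ← Subgroup.index_eq_card]
    change (C ⊓ H).relIndex L = _
    rw [← Subgroup.relIndex_mul_relIndex _ _ _ inf_le_right hHL, Subgroup.inf_relIndex_right, hj2, mul_comm]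
    congr 1
  refine ⟨j, ?_, hj.trans hm, hHL, Or.inr ⟨p, q, hp, hq, ?_, hcardq, hidx⟩⟩
  · rw [pos_iff_ne_zero]
    rintro rfl
    apply hnorm
    rw [pow_zero, Subgroup.relIndex_eq_one] at hj2
    rw [inf_eq_right.2 hj2] at hcore
    rw [← hcore]
    infer_instance
  · intro h
    exact hnorm (aux_normal_of_nilp _ p hp hidx h)

theorem aux_cyc_iff {G : Type*} [Group G] (H K : Subgroup G) [(H.subgroupOf K).Normal] :
    IsCyclic (↥K ⧸ H.subgroupOf K) ↔ ∃ g ∈ K, ∀ x ∈ K, ∃ n : ℤ, (g ^ n)⁻¹ * x ∈ H := by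
  constructor
  · rintro ⟨g, hg⟩
    obtain ⟨g, rfl⟩ := QuotientGroup.mk_surjective g
    refine ⟨g, g.2, fun x hx => ?_⟩
    obtain ⟨n, hn⟩ := hg (QuotientGroup.mk ⟨x, hx⟩)
    refine ⟨n, ?_⟩
    dsimp only at hn
    rw [← QuotientGroup.mk_zpow, QuotientGroup.eq, Subgroup.mem_subgroupOf] at hn
    simpa using hn
  · rintro ⟨g, hg, h⟩
    refine ⟨QuotientGroup.mk ⟨g, hg⟩, fun x => ?_⟩
    obtain ⟨x, rfl⟩ := QuotientGroup.mk_surjective x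
    obtain ⟨n, hn⟩ := h x x.2
    refine ⟨n, ?_⟩
    dsimp only
    rw [← QuotientGroup.mk_zpow, QuotientGroup.eq, Subgroup.mem_subgroupOf]
    simpa using hn

theorem aux_ss_lift {G : Type*} [Group G] (N : Subgroup G) [N.Normal] [hN : IsCyclic N]
    (h : IsSupersolvable (G ⧸ N)) : IsSupersolvable G := by
  obtain ⟨m, c, h0, hm, hn, hle, hcyc⟩ := h
  let π := QuotientGroup.mk' N
  refine ⟨m + 1, fun i => Nat.casesOn i ⊥ (fun j => (c j).comap π), rfl, ?_, ?_, ?_, ?_⟩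
  · change (c m).comap π = ⊤
    rw [hm]; rfl
  · rintro (_ | i)
    · change (⊥ : Subgroup G).Normal
      infer_instance
    · change ((c i).comap π).Normal
      exact (hn i).comap π
  · rintro (_ | i) hi
    · exact bot_le
    · exact Subgroup.comap_mono (hle i (by omega))
  · rintro (_ | i) hi
    · intro _
      rw [aux_cyc_iff]
      obtain ⟨g, hg⟩ := hN
      have hc0 : (c 0).comap π = N := by
        rw [h0]
        exact QuotientGroup.ker_mk' N
      refine ⟨g, ?_, ?_⟩
      · change (g : G) ∈ (c 0).comap π
        rw [hc0]; exact g.2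
      · intro x hx
        change x ∈ (c 0).comap π at hx
        rw [hc0] at hx
        obtain ⟨n, hn⟩ := hg ⟨x, hx⟩
        refine ⟨n, ?_⟩
        have := congrArg Subtype.val hn
        simp only [Subgroup.coe_zpow] at this
        rw [this]
        simp
    · intro _
      rw [aux_cyc_iff]
      have hi' : i < m := by omega
      have := hn i
      obtain ⟨g, hg, h⟩ := (aux_cyc_iff _ _).1 (hcyc i hi')
      obtain ⟨g, rfl⟩ := QuotientGroup.mk'_surjective N g
      refine ⟨g, hg, fun x hx => ?_⟩
      obtain ⟨n, hn⟩ := h (π x) hx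
      refine ⟨n, ?_⟩
      change π _ ∈ c i
      rw [map_mul, map_inv, map_zpow]
      exact hn

def AuxS {G : Type*} [Group G] (p : ℕ) (C Q : Subgroup G) : Prop :=
  Q ≤ C ∧ IsPGroup p Q ∧ ∀ c ∈ C, ∀ x ∈ Q, c * x * c⁻¹ ∈ Q

theorem aux_S_le {G : Type*} [Group G] {p : ℕ} {C Q : Subgroup G} (h : AuxS p C Q) :
    C ≤ Subgroup.normalizer (Q : Set G) := by
  intro c hc
  rw [Subgroup.mem_normalizer_iff]
  intro x
  refine ⟨h.2.2 c hc x, fun hx => ?_⟩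
  have := h.2.2 _ (C.inv_mem hc) _ hx
  simpa [mul_assoc] using this

theorem aux_S_sup {G : Type*} [Group G] {p : ℕ} {C Q R : Subgroup G} (h : AuxS p C Q)
    (h2 : AuxS p C R) : AuxS p C (Q ⊔ R) := by
  refine ⟨sup_le h.1 h2.1, IsPGroup.to_sup_of_normal_right' h.2.1 h2.2.1
    (h.1.trans (aux_S_le h2)), fun c hc => ?_⟩
  have : Q ⊔ R ≤ (Q ⊔ R).comap (MulAut.conj c).toMonoidHom := by
    apply sup_le
    · intro x hx
      exact (le_sup_left : Q ≤ Q ⊔ R) (h.2.2 c hc x hx)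
    · intro x hx
      exact (le_sup_right : R ≤ Q ⊔ R) (h2.2.2 c hc x hx)
  exact this

theorem aux_S_normal {G : Type*} [Group G] [Finite G] {p : ℕ} {C L Q : Subgroup G} (hCL : C ≤ L)
    (hL : ∀ g ∈ L, ∀ x ∈ C, g * x * g⁻¹ ∈ C) (h : AuxS p C Q) : ∃ R, Q ≤ R ∧ AuxS p L R := by
  have hfin : {R : Subgroup G | AuxS p C R}.Finite := Set.toFinite _
  obtain ⟨R, hR⟩ := hfin.exists_maximal ⟨Q, h⟩
  have hmax : ∀ T, AuxS p C T → T ≤ R := by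
    intro T hT
    exact le_sup_right.trans (hR.2 (aux_S_sup hR.1 hT) le_sup_left)
  refine ⟨R, hmax Q h, hR.1.1.trans hCL, hR.1.2.1, fun g hg x hx => ?_⟩
  have key : AuxS p C (R.comap (MulAut.conj g⁻¹).toMonoidHom) := by
    refine ⟨?_, ?_, ?_⟩
    · intro y hy
      have hy : g⁻¹ * y * g⁻¹⁻¹ ∈ R := hy
      have := hL g hg _ (hR.1.1 hy)
      simpa [mul_assoc] using this
    · exact hR.1.2.1.comap_of_injective _ (MulAut.conj g⁻¹).injective
    · intro c hc y hy
      have hy : g⁻¹ * y * g⁻¹⁻¹ ∈ R := hy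
      change g⁻¹ * (c * y * c⁻¹) * g⁻¹⁻¹ ∈ R
      have h1 := hR.1.2.2 _ (hL _ (L.inv_mem hg) c hc) _ hy
      convert h1 using 1
      group
  apply hmax _ key
  change g⁻¹ * (g * x * g⁻¹) * g⁻¹⁻¹ ∈ R
  convert hx using 1
  group

theorem aux_core_factorial {L : Type*} [Group L] [Finite L] (H : Subgroup L) :
    Nat.card (L ⧸ H.normalCore) ∣ H.index.factorial := by
  rw [← Subgroup.index_eq_card, Subgroup.normalCore_eq_ker, Subgroup.index_ker,
    Subgroup.index_eq_card, ← Nat.card_perm]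
  exact Subgroup.card_subgroup_dvd_card _

theorem aux_op_step {G : Type*} [Group G] [Finite G] {p : ℕ} [Fact p.Prime]
    (hmax : ∀ q, q.Prime → q ∣ Nat.card G → q ≤ p) {n : ℕ} (hn : 0 < n) {H L Q : Subgroup G}
    (hME : ModularlyEmbedded n H L) (hQ : AuxS p H Q) : ∃ R, Q ≤ R ∧ AuxS p L R := by
  have hp : p.Prime := Fact.out
  obtain ⟨hHL, hN | ⟨r, q, hr, hq, hnil, hcard, hidx⟩⟩ := hME
  · refine aux_S_normal hHL (fun g hg x hx => ?_) hQ
    exact hN.conj_mem ⟨x, hHL hx⟩ hx ⟨g, hg⟩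
  have hqp : q ≠ p := by
    rintro rfl
    have hrq : r ≠ q := by
      rintro rfl
      apply hnil
      have : IsPGroup r (L ⧸ (H.subgroupOf L).normalCore) :=
        IsPGroup.of_card (n := n + 1) (by rw [hcard, pow_succ, mul_comm])
      exact this.isNilpotent
    have hrle : r ≤ q := hmax r hr (by
      rw [← hidx]
      exact (Subgroup.index_dvd_card _).trans (Subgroup.card_subgroup_dvd_card L))
    have h1 := aux_core_factorial (H.subgroupOf L)
    rw [hcard, hidx] at h1
    have h2 : q ∣ r.factorial := 
      ((dvd_pow_self q hn.ne').trans (Dvd.intro_left _ rfl)).trans h1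
    have := (hp.dvd_factorial).1 h2
    omega
  set C := (H.subgroupOf L).normalCore.map L.subtype with hC
  have hCL : C ≤ L := Subgroup.map_subtype_le _
  have hCH : C ≤ H := by
    rintro _ ⟨x, hx, rfl⟩
    exact Subgroup.normalCore_le (H.subgroupOf L) hx
  have hCn : ∀ g ∈ L, ∀ x ∈ C, g * x * g⁻¹ ∈ C := by
    rintro g hg _ ⟨x, hx, rfl⟩
    exact ⟨⟨g, hg⟩ * x * ⟨g, hg⟩⁻¹, (Subgroup.normalCore_normal _).conj_mem x hx _, rfl⟩
  have hQC : Q ≤ C := by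
    intro x hx
    have hxH := hQ.1 hx
    have hxL := hHL hxH
    refine ⟨⟨x, hxL⟩, ?_, rfl⟩
    let π := QuotientGroup.mk' (H.subgroupOf L).normalCore
    have hcq : Nat.card ((H.subgroupOf L).map π) = q ^ n := by
      rw [← Subgroup.relIndex_ker, QuotientGroup.ker_mk']
      have := Subgroup.relIndex_mul_index (Subgroup.normalCore_le (H.subgroupOf L))
      rw [hidx, Subgroup.index_eq_card, hcard, mul_comm] at this
      exact Nat.eq_of_mul_eq_mul_left hr.pos this
    have h1 : orderOf (π ⟨x, hxL⟩) ∣ q ^ n := by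
      rw [← hcq]
      exact Subgroup.orderOf_dvd_natCard _ ⟨_, hxH, rfl⟩
    obtain ⟨i, hi⟩ := hQ.2.1 ⟨x, hx⟩
    have hi' : x ^ p ^ i = 1 := congrArg Subtype.val hi
    have h2 : orderOf (π ⟨x, hxL⟩) ∣ p ^ i := by
      apply orderOf_dvd_of_pow_eq_one
      rw [← map_pow]
      have : (⟨x, hxL⟩ : L) ^ p ^ i = 1 := Subtype.ext hi'
      rw [this, map_one]
    have h3 : (q ^ n).Coprime (p ^ i) := Nat.Coprime.pow _ _ ((Nat.coprime_primes hq hp).2 hqp)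
    have h4 := Nat.eq_one_of_dvd_coprimes h3 h1 h2
    rw [orderOf_eq_one_iff] at h4
    exact (QuotientGroup.eq_one_iff _).1 h4
  exact aux_S_normal hCL hCn (Q := Q) ⟨hQC, hQ.2.1, fun c hc => hQ.2.2 c (hCH hc)⟩

theorem aux_op {G : Type*} [Group G] [Finite G] {p k : ℕ} [Fact p.Prime]
    (hmax : ∀ q, q.Prime → q ∣ Nat.card G → q ≤ p) {A Q : Subgroup G}
    (h : KSubmodularIn k A ⊤) (hQ : AuxS p A Q) : ∃ R, Q ≤ R ∧ AuxS p ⊤ R := by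
  obtain ⟨m, c, h0, hm, hc⟩ := h
  have : ∀ i ≤ m, ∃ R, Q ≤ R ∧ AuxS p (c i) R := by
    intro i
    induction i with
    | zero => exact fun _ => ⟨Q, le_rfl, h0 ▸ hQ⟩
    | succ i ih =>
      intro hi
      obtain ⟨R, hQR, hR⟩ := ih (by omega)
      obtain ⟨n, hn, -, hme⟩ := hc i (by omega)
      obtain ⟨R', h1, h2⟩ := aux_op_step hmax hn hme hR
      exact ⟨R', hQR.trans h1, h2⟩
  exact hm ▸ this m le_rfl

theorem aux_split {G : Type*} [Group G] [Finite G] (p : ℕ) [Fact p.Prime] (A : Subgroup G)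
    (hA : Group.IsNilpotent A) : ∃ Q A1 : Subgroup G, AuxS p A Q ∧ A1 ≤ A ∧
      p.Coprime (Nat.card A1) ∧ (∀ a ∈ A, ∃ x ∈ Q, ∃ y ∈ A1, a = x * y) ∧
      ∀ x ∈ Q, ∀ y ∈ A1, x * y = y * x := by
  have hp : p.Prime := Fact.out
  let S : Sylow p A := default
  have hSn : (S : Subgroup A).Normal := inferInstance
  obtain ⟨T, hT⟩ := Subgroup.exists_right_complement'_of_coprime (N := (S : Subgroup A))
    S.card_coprime_index
  have hTp : p.Coprime (Nat.card T) := by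
    have h1 : Nat.card T = (S : Subgroup A).index := hT.symm.index_eq_card.symm
    rw [h1]
    exact (Nat.Prime.coprime_iff_not_dvd hp).2 S.not_dvd_index
  refine ⟨(S : Subgroup A).map A.subtype, T.map A.subtype,
    ⟨Subgroup.map_subtype_le _, S.2.map _, ?_⟩, Subgroup.map_subtype_le _, 
    hTp.coprime_dvd_right (Subgroup.card_map_dvd _ _), ?_, ?_⟩
  · rintro c hc _ ⟨x, hx, rfl⟩
    exact ⟨⟨c, hc⟩ * x * ⟨c, hc⟩⁻¹, hSn.conj_mem x hx _, rfl⟩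
  · intro a ha
    have : (⟨a, ha⟩ : A) ∈ (S : Subgroup A) ⊔ T := by rw [hT.sup_eq_top]; trivial
    obtain ⟨x, hx, y, hy, h⟩ := Subgroup.mem_sup_of_normal_left.1 this
    exact ⟨x, ⟨x, hx, rfl⟩, y, ⟨y, hy, rfl⟩, (congrArg Subtype.val h).symm⟩
  · rintro _ ⟨x, hx, rfl⟩ _ ⟨y, hy, rfl⟩
    obtain ⟨i, hi⟩ := IsPGroup.iff_orderOf.1 S.2 ⟨x, hx⟩
    have h1 : orderOf x = p ^ i := by rw [← hi]; simp
    have h2 : orderOf y ∣ Nat.card T := Subgroup.orderOf_dvd_natCard _ hy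
    have := aux_nilp_commute x y (by
      rw [h1]; exact (Nat.Coprime.pow_left _ hTp).coprime_dvd_right h2)
    exact congrArg Subtype.val this.eq

theorem aux_card_mul {G : Type*} [Group G] [Finite G] (A B : Subgroup G)
    (h : ∀ g : G, ∃ a ∈ A, ∃ b ∈ B, g = a * b) : Nat.card G ∣ Nat.card A * Nat.card B := by
  have h1 : B.index ∣ Nat.card A := by
    have h2 := MulAction.index_stabilizer A (QuotientGroup.mk 1 : G ⧸ B)
    have h3 : MulAction.orbit A (QuotientGroup.mk 1 : G ⧸ B) = Set.univ := by
      rw [Set.eq_univ_iff_forall]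
      intro x
      obtain ⟨g, rfl⟩ := QuotientGroup.mk_surjective x
      obtain ⟨a, ha, b, hb, rfl⟩ := h g
      refine ⟨⟨a, ha⟩, ?_⟩
      change (QuotientGroup.mk (a * 1) : G ⧸ B) = _
      rw [QuotientGroup.eq]
      simpa using hb
    rw [h3, Set.ncard_univ, ← Subgroup.index_eq_card] at h2
    rw [← h2]
    exact Subgroup.index_dvd_card _
  rw [← Subgroup.card_mul_index B, mul_comm]
  exact Nat.mul_dvd_mul_right h1 _

theorem aux_idx {G : Type*} [Group G] [Finite G] (N H : Subgroup G) [N.Normal]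
    (hd : N ⊓ H = ⊥) : H.relIndex (H ⊔ N) = Nat.card N := by
  set L := H ⊔ N
  have hHL : H ≤ L := le_sup_left
  have hNL : N ≤ L := le_sup_right
  have h1 : Nat.card L * Nat.card (N ⊓ H : Subgroup G) = Nat.card N * Nat.card H := by
    have e1 : N.relIndex L = N.relIndex H := Subgroup.relIndex_sup_right H N
    have e2 : N.relIndex L * Nat.card N = Nat.card L := by
      rw [← Subgroup.relIndex_bot_left, ← Subgroup.relIndex_bot_left, mul_comm]
      exact Subgroup.relIndex_mul_relIndex _ _ _ bot_le hNL
    have e3 : N.relIndex H * Nat.card (N ⊓ H : Subgroup G) = Nat.card H := by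
      rw [← Subgroup.inf_relIndex_right, ← Subgroup.relIndex_bot_left, 
        ← Subgroup.relIndex_bot_left, mul_comm]
      exact Subgroup.relIndex_mul_relIndex _ _ _ bot_le inf_le_right
    rw [← e2, ← e3, e1]; ring
  have h2 : Nat.card H * H.relIndex L = Nat.card L := by
    rw [← Subgroup.relIndex_bot_left, ← Subgroup.relIndex_bot_left]
    exact Subgroup.relIndex_mul_relIndex _ _ _ bot_le hHL
  rw [hd, Subgroup.card_bot, mul_one, ← h2, mul_comm (Nat.card N)] at h1
  exact Nat.eq_of_mul_eq_mul_left Nat.card_pos h1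

theorem aux_central {G : Type*} [Group G] [Finite G] (N : Subgroup G) 
    (hN1 : N ≠ ⊥) (hmin : ∀ M : Subgroup G, M.Normal → M ≤ N → M = ⊥ ∨ M = N)
    (hC : Subgroup.centralizer (N : Set G) = ⊤) : (Nat.card N).Prime := by
  have h1 : Nat.card N ≠ 1 := fun h => hN1 (Subgroup.card_eq_one.1 h)
  obtain ⟨r, hr, hrd⟩ := Nat.exists_prime_and_dvd h1
  have : Fact r.Prime := ⟨hr⟩
  obtain ⟨x, hx⟩ := exists_prime_orderOf_dvd_card' (G := N) r hrd
  have hcomm : ∀ g : G, ∀ y ∈ N, g * y * g⁻¹ = y := by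
    intro g y hy
    have : g ∈ Subgroup.centralizer (N : Set G) := by rw [hC]; trivial
    rw [Subgroup.mem_centralizer_iff] at this
    rw [← this y hy]; group
  have hle : Subgroup.zpowers (x : G) ≤ N := by
    rw [Subgroup.zpowers_le]; exact x.2
  have hn : (Subgroup.zpowers (x : G)).Normal := ⟨fun y hy g => by
    rw [hcomm g y (hle hy)]; exact hy⟩
  have hx' : orderOf (x : G) = r := by rw [← hx]; simp
  rcases hmin _ hn hle with h | h
  · rw [← Nat.card_zpowers, h, Subgroup.card_bot] at hx'
    exact absurd hx'.symm hr.one_lt.ne'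
  · rw [← h, Nat.card_zpowers, hx']; exact hr

theorem aux_final {G : Type*} [Group G] [Finite G] {k : ℕ} (N B : Subgroup G) [N.Normal]
    (hN1 : N ≠ ⊥) (hmin : ∀ M : Subgroup G, M.Normal → M ≤ N → M = ⊥ ∨ M = N)
    (hCB : Subgroup.centralizer (N : Set G) ⊔ B = ⊤) 
    (hNB : N ≤ B → B ≤ Subgroup.centralizer (N : Set G)) (hB : KSubmodularIn k B ⊤) :
    ∃ r q m : ℕ, r.Prime ∧ q.Prime ∧ Nat.card N = r ∧ m ≤ k ∧ 
      (Subgroup.centralizer (N : Set G)).index = q ^ m := by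
  set C := Subgroup.centralizer (N : Set G) with hCdef
  have hCn : C.Normal := inferInstance
  have hcen : C = ⊤ → ∃ r q m : ℕ, r.Prime ∧ q.Prime ∧ Nat.card N = r ∧ m ≤ k ∧ 
      C.index = q ^ m := fun h =>
    ⟨_, 2, 0, aux_central N hN1 hmin h, Nat.prime_two, rfl, Nat.zero_le _, by simp [h]⟩
  by_cases hb : N ≤ B
  · exact hcen (by rw [← hCB]; exact (sup_eq_left.2 (hNB hb)).symm)
  obtain ⟨m, c, h0, hm, hc⟩ := hB
  have hBc : ∀ i ≤ m, B ≤ c i := by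
    intro i
    induction i with
    | zero => intro _; rw [h0]
    | succ i ih =>
      intro hi
      obtain ⟨n, -, -, h⟩ := hc i (by omega)
      exact (ih (by omega)).trans h.1
  have hex : ∃ i < m, ¬ N ≤ c i ∧ N ≤ c (i + 1) := by
    by_contra! hcon
    have : ∀ i ≤ m, ¬ N ≤ c i := by
      intro i
      induction i with
      | zero => intro _; rwa [h0]
      | succ i ih => exact fun hi => hcon i (by omega) (ih (by omega))
    apply this m le_rfl
    rw [hm]; exact le_top
  obtain ⟨i, hi, hi1, hi2⟩ := hex
  obtain ⟨n, hn, hnk, hHL, hemb⟩ := hc i hi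
  have hBH := hBc i hi.le
  generalize c i = H at *
  generalize c (i + 1) = L at *
  have hCH : C ⊔ H = ⊤ := by
    rw [eq_top_iff, ← hCB]; exact sup_le_sup_left hBH _
  have hCc : ∀ g ∈ C, ∀ y ∈ N, g * y * g⁻¹ = y := by
    intro g hg y hy
    rw [hCdef, Subgroup.mem_centralizer_iff] at hg
    rw [← hg y hy]; group
  have hd : N ⊓ H = ⊥ := by
    have hnorm : (N ⊓ H).Normal := by
      refine ⟨fun x hx g => ?_⟩
      have hg : g ∈ C ⊔ H := by rw [hCH]; trivial
      obtain ⟨y, hy, z, hz, rfl⟩ := Subgroup.mem_sup_of_normal_left.1 hg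
      have h1 : z * x * z⁻¹ ∈ N ⊓ H :=
        ⟨‹N.Normal›.conj_mem _ hx.1 _, H.mul_mem (H.mul_mem hz hx.2) (H.inv_mem hz)⟩
      have h2 : y * z * x * (y * z)⁻¹ = z * x * z⁻¹ := by
        rw [← hCc y hy _ h1.1]; group
      rw [h2]; exact h1
    rcases hmin _ hnorm inf_le_left with h | h
    · exact h
    · exact absurd (inf_eq_left.1 h) hi1
  rcases hemb with hn | ⟨r, q, hr, hq, hnil, hcard, hidx⟩
  · apply hcen
    rw [← hCH]
    refine (sup_eq_left.2 ?_).symm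
    intro h hh
    rw [hCdef, Subgroup.mem_centralizer_iff]
    intro x hx
    have h1 : x * h * x⁻¹ * h⁻¹ ∈ N ⊓ H := by
      constructor
      · have := N.mul_mem hx (‹N.Normal›.conj_mem _ (N.inv_mem hx) h)
        simpa [mul_assoc] using this
      · have : x * h * x⁻¹ ∈ H := hn.conj_mem ⟨h, hHL hh⟩ hh ⟨x, hi2 hx⟩
        exact H.mul_mem this (H.inv_mem hh)
    rw [hd, Subgroup.mem_bot, mul_inv_eq_one, mul_inv_eq_iff_eq_mul] at h1
    exact h1
  · have hLe : H ⊔ N = L := by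
      apply le_antisymm (sup_le hHL hi2)
      have h6 := Subgroup.relIndex_mul_relIndex H (H ⊔ N) L le_sup_left (sup_le hHL hi2)
      have h7 : H.relIndex L = r := hidx
      rw [h7] at h6
      rcases (Nat.dvd_prime hr).1 (Dvd.intro _ h6) with h8 | h8
      · exact absurd (le_sup_right.trans (Subgroup.relIndex_eq_one.1 h8)) hi1
      · rw [h8] at h6
        exact Subgroup.relIndex_eq_one.1 (Nat.eq_of_mul_eq_mul_left hr.pos (by simpa using h6))
    have hcN : Nat.card N = r := by
      rw [← aux_idx N H hd, hLe]; exact hidx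
    have hcore : (H.subgroupOf L).normalCore ≤ (C ⊓ H).subgroupOf L := by
      intro x hx
      refine ⟨?_, Subgroup.normalCore_le (H.subgroupOf L) hx⟩
      change (x : G) ∈ C
      rw [hCdef, Subgroup.mem_centralizer_iff]
      intro n hn
      have hcm := Subgroup.commute_of_normal_of_disjoint (H.subgroupOf L).normalCore
        (N.subgroupOf L) inferInstance inferInstance (by
          rw [disjoint_iff_inf_le]
          rintro y ⟨hy1, hy2⟩
          have : (y : G) ∈ N ⊓ H := ⟨hy2, Subgroup.normalCore_le (H.subgroupOf L) hy1⟩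
          rw [hd] at this
          exact Subtype.ext this) x ⟨n, hi2 hn⟩ hx hn
      exact (congrArg Subtype.val hcm.eq).symm
    have h1 : (H.subgroupOf L).normalCore.relIndex (H.subgroupOf L) = q ^ n := by
      have := Subgroup.relIndex_mul_index (Subgroup.normalCore_le (H.subgroupOf L))
      rw [hidx, Subgroup.index_eq_card, hcard, mul_comm] at this
      exact Nat.eq_of_mul_eq_mul_left hr.pos this
    have h2 : C.index = (C ⊓ H).relIndex H := by
      rw [← Subgroup.relIndex_top_right, ← hCH, Subgroup.relIndex_sup_left, 
        Subgroup.inf_relIndex_right]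
    have h3 : C.index ∣ q ^ n := by
      rw [h2, ← h1, ← Subgroup.relIndex_subgroupOf hHL]
      exact Subgroup.relIndex_dvd_of_le_left _ hcore
    obtain ⟨j, hj, hj2⟩ := (Nat.dvd_prime_pow hq).1 h3
    exact ⟨r, q, j, hr, hq, hcN, hj.trans hnk, hj2⟩

theorem aux_cent {G : Type*} [Group G] [Finite G] (P K A1 B1 QA QB N : Subgroup G) [N.Normal]
    (hAK : A1 ≤ K) (hBK : B1 ≤ K) 
    (hcA : ∀ x ∈ QA, ∀ y ∈ A1, x * y = y * x) (hcB : ∀ x ∈ QB, ∀ y ∈ B1, x * y = y * x)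
    (hG : ∀ g : G, ∃ x ∈ P, ∃ y ∈ K, g = x * y)
    (hK : ∀ g ∈ K, ∃ a ∈ A1, ∃ b ∈ B1, g = a * b)
    (hP : ∀ g ∈ P, ∃ a ∈ QA, ∃ b ∈ QB, g = a * b)
    (hNP : N ≤ P) (hNc : ∀ x ∈ N, ∀ y ∈ P, x * y = y * x)
    (hco : (Nat.card N).Coprime (Nat.card K))
    (hmin : ∀ M : Subgroup G, M.Normal → M ≤ N → M = ⊥ ∨ M = N) :
    A1 ≤ Subgroup.centralizer (N : Set G) ∨ B1 ≤ Subgroup.centralizer (N : Set G) := by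
  have hNn : N.Normal := inferInstance
  let _ : CommGroup N := { (inferInstance : Group N) with
    mul_comm := fun x y => Subtype.ext (hNc x x.2 y (hNP y.2)) }
  let φ : K →* MulAut N := MulAut.conjNormal.comp K.subtype
  have hφ : ∀ (a : K) (z : N), ((φ a z : N) : G) = a * z * (a : G)⁻¹ := fun a z => rfl
  have hdec : ∀ x : N, ∃ u v, (∀ a ∈ A1.subgroupOf K, φ a u = u) ∧
      (∀ b ∈ B1.subgroupOf K, φ b v = v) ∧ x = u * v := by
    intro z
    obtain ⟨a, ha, b, hb, hab⟩ := hP z (hNP z.2)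
    have hbeta : ∀ β ∈ B1, β * a * β⁻¹ * a⁻¹ = β * z * β⁻¹ * (z : G)⁻¹ := by
      intro β hβ
      have e1 : a = z * b⁻¹ := by rw [hab]; group
      have e2 : b⁻¹ * β⁻¹ * b = β⁻¹ := by
        have := hcB b hb β⁻¹ (B1.inv_mem hβ)
        rw [mul_assoc, ← this]; group
      calc β * a * β⁻¹ * a⁻¹ = β * z * (b⁻¹ * β⁻¹ * b) * (z : G)⁻¹ := by rw [e1]; group
        _ = _ := by rw [e2]
    have hf : ∀ h : K, (h : G) * a * (h : G)⁻¹ * a⁻¹ ∈ N := by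
      intro h
      obtain ⟨α, hα, β, hβ, e⟩ := hK h h.2
      rw [e]
      have e3 : α⁻¹ * a⁻¹ = a⁻¹ * α⁻¹ := by
        rw [← mul_inv_rev, ← mul_inv_rev, hcA a ha α hα]
      have e4 : α * β * a * (α * β)⁻¹ * a⁻¹ = α * (β * a * β⁻¹ * a⁻¹) * α⁻¹ := by
        calc α * β * a * (α * β)⁻¹ * a⁻¹ = α * β * a * β⁻¹ * (α⁻¹ * a⁻¹) := by group
          _ = _ := by rw [e3]; group
      rw [e4]
      apply hNn.conj_mem
      rw [hbeta β hβ]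
      exact N.mul_mem (hNn.conj_mem _ z.2 _) (N.inv_mem z.2)
    let f : K → N := fun h => ⟨_, hf h⟩
    obtain ⟨n, hn⟩ := aux_cocycle φ hco f (by
      intro g h
      rw [mul_comm]
      apply Subtype.ext
      rw [Subgroup.coe_mul, hφ]
      change ((g * h : K) : G) * a * ((g * h : K) : G)⁻¹ * a⁻¹ = 
        g * (h * a * (h : G)⁻¹ * a⁻¹) * (g : G)⁻¹ * (g * a * (g : G)⁻¹ * a⁻¹)
      push_cast
      group)
    have hA1 : ∀ α ∈ A1.subgroupOf K, φ α n = n := by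
      intro α hα
      have e := hn α
      have e1 : f α = 1 := by
        apply Subtype.ext
        change (α : G) * a * (α : G)⁻¹ * a⁻¹ = 1
        rw [← hcA a ha α (Subgroup.mem_subgroupOf.1 hα)]
        group
      rw [e1] at e
      exact (mul_inv_eq_one.1 e.symm).symm
    have hB1 : ∀ β ∈ B1.subgroupOf K, φ β (z * n) = z * n := by
      intro β hβ
      have e := hn β
      have e1 : f β = φ β z * z⁻¹ := by
        apply Subtype.ext
        exact hbeta β (Subgroup.mem_subgroupOf.1 hβ)
      rw [e1, ← div_eq_mul_inv, ← div_eq_mul_inv, div_eq_div_iff_mul_eq_mul] at e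
      rw [map_mul, e, mul_comm]
    exact ⟨n⁻¹, z * n, fun α hα => by rw [map_inv, hA1 α hα], hB1, by rw [mul_comm z]; simp⟩
  rcases hmin (N ⊓ Subgroup.center G) inferInstance inf_le_left with h0 | h0
  swap
  · left
    intro a _
    rw [Subgroup.mem_centralizer_iff]
    intro x hx
    have h1 : x ∈ N ⊓ Subgroup.center G := by rw [h0]; exact hx
    exact (Subgroup.mem_center_iff.1 h1.2 a).symm
  have hfix : ∀ x : N, (∀ k, φ k x = x) → x = 1 := by
    intro x hx
    have h1 : (x : G) ∈ N ⊓ Subgroup.center G := by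
      refine ⟨x.2, Subgroup.mem_center_iff.2 fun g => ?_⟩
      obtain ⟨y, hy, k, hk, rfl⟩ := hG g
      have e1 : k * x * k⁻¹ = x := congrArg Subtype.val (hx ⟨k, hk⟩)
      have e2 : k * x = x * k := by rw [mul_inv_eq_iff_eq_mul] at e1; exact e1
      rw [mul_assoc, e2, ← mul_assoc, ← hNc x x.2 y hy, mul_assoc]
    rw [h0] at h1
    exact Subtype.ext h1
  have hmod := aux_module φ hco (A1.subgroupOf K) (B1.subgroupOf K) (by
    intro k
    obtain ⟨a, ha, b, hb, e⟩ := hK k k.2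
    exact ⟨⟨a, hAK ha⟩, ha, ⟨b, hBK hb⟩, hb, Subtype.ext e⟩) hdec hfix
  have hM : (N ⊓ Subgroup.centralizer (B1 : Set G)).Normal := by
    refine ⟨fun y hy g => ⟨hNn.conj_mem y hy.1 g, ?_⟩⟩
    obtain ⟨x, hx, k, hk, rfl⟩ := hG g
    obtain ⟨a, ha, b, hb, rfl⟩ := hK k hk
    have hy2 : ∀ b ∈ B1, b * y * b⁻¹ = y := by
      intro b hb
      rw [mul_inv_eq_iff_eq_mul]
      exact Subgroup.mem_centralizer_iff.1 hy.2 b hb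
    have e1 : x * (a * b) * y * (x * (a * b))⁻¹ = a * y * a⁻¹ := by
      have e2 := hNc _ (hNn.conj_mem y hy.1 a) x hx
      calc x * (a * b) * y * (x * (a * b))⁻¹ = x * (a * (b * y * b⁻¹) * a⁻¹) * x⁻¹ := by group
        _ = a * y * a⁻¹ := by rw [hy2 b hb, ← e2]; group
    rw [e1]
    refine Subgroup.mem_centralizer_iff.2 ?_
    intro b' hb'
    have e3 := hmod ⟨a, hAK ha⟩ ha ⟨y, hy.1⟩ (fun b hb => Subtype.ext (hy2 b hb)) ⟨b', hBK hb'⟩ hb'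
    have e4 : b' * (a * y * a⁻¹) * b'⁻¹ = a * y * a⁻¹ := congrArg Subtype.val e3
    rwa [mul_inv_eq_iff_eq_mul] at e4
  rcases hmin _ hM inf_le_left with h1 | h1
  · left
    intro a ha
    rw [Subgroup.mem_centralizer_iff]
    intro x hx
    obtain ⟨u, v, hu, hv, e⟩ := hdec ⟨x, hx⟩
    have hv1 : (v : G) ∈ N ⊓ Subgroup.centralizer (B1 : Set G) := by
      refine ⟨v.2, Subgroup.mem_centralizer_iff.2 fun b hb => ?_⟩
      have e4 : b * v * b⁻¹ = v := congrArg Subtype.val (hv ⟨b, hBK hb⟩ hb)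
      rwa [mul_inv_eq_iff_eq_mul] at e4
    rw [h1] at hv1
    have hv2 : v = 1 := Subtype.ext hv1
    rw [hv2, mul_one] at e
    have e4 : a * u * a⁻¹ = u := congrArg Subtype.val (hu ⟨a, hAK ha⟩ ha)
    rw [← e, mul_inv_eq_iff_eq_mul] at e4
    exact e4.symm
  · right
    intro b hb
    rw [Subgroup.mem_centralizer_iff]
    intro x hx
    have h2 : x ∈ N ⊓ Subgroup.centralizer (B1 : Set G) := by rw [h1]; exact hx
    exact (Subgroup.mem_centralizer_iff.1 h2.2 b hb).symm

theorem aux_fin2 {G : Type*} [Group G] [Finite G] {p : ℕ} [Fact p.Prime] {P A B A1 B1 QA QB N : Subgroup G} 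
    (hpN : IsPGroup p N) (hB : Group.IsNilpotent B) (hAd : ∀ a ∈ A, ∃ x ∈ QA, ∃ y ∈ A1, a = x * y)
    (hBd : ∀ a ∈ B, ∃ x ∈ QB, ∃ y ∈ B1, a = x * y) (hB1 : B1 ≤ B) (hBp : p.Coprime (Nat.card B1))
    (hAP : QA ≤ P) (hBP : QB ≤ P) (hprod : ∀ g : G, ∃ a ∈ A, ∃ b ∈ B, g = a * b)
    (hPC : P ≤ Subgroup.centralizer (N : Set G)) (hAC : A1 ≤ Subgroup.centralizer (N : Set G)) :
    Subgroup.centralizer (N : Set G) ⊔ B = ⊤ ∧ 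
    (N ≤ B → B ≤ Subgroup.centralizer (N : Set G)) := by
  constructor
  · rw [eq_top_iff]
    intro g _
    obtain ⟨a, ha, b, hb, rfl⟩ := hprod g
    obtain ⟨x, hx, y, hy, rfl⟩ := hAd a ha
    exact Subgroup.mul_mem _ (Subgroup.mem_sup_left (Subgroup.mul_mem _ (hPC (hAP hx)) (hAC hy)))
      (Subgroup.mem_sup_right hb)
  · intro hNB b hb
    obtain ⟨x, hx, y, hy, rfl⟩ := hBd b hb
    refine Subgroup.mul_mem _ (hPC (hBP hx)) ?_
    rw [Subgroup.mem_centralizer_iff]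
    intro z hz
    obtain ⟨i, hi⟩ := IsPGroup.iff_orderOf.1 hpN ⟨z, hz⟩
    have h1 : orderOf (⟨z, hNB hz⟩ : B) = p ^ i := by rw [← hi]; simp
    have h2 : orderOf (⟨y, hB1 hy⟩ : B) ∣ Nat.card B1 := by
      rw [Subgroup.orderOf_mk]
      exact Subgroup.orderOf_dvd_natCard _ hy
    have := aux_nilp_commute (⟨z, hNB hz⟩ : B) ⟨y, hB1 hy⟩ (by
      rw [h1]; exact (Nat.Coprime.pow_left _ hBp).coprime_dvd_right h2)
    exact congrArg Subtype.val this.eq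

theorem aux_K {G : Type*} [Group G] [Finite G] (p : ℕ) [Fact p.Prime] (P A B A1 B1 : Subgroup G)
    [P.Normal] (hP : IsPGroup p P) (hi : p.Coprime P.index)
    (hA : ∀ a ∈ A, ∀ x ∈ A1, a * x * a⁻¹ ∈ A1) (hB : ∀ a ∈ B, ∀ x ∈ B1, a * x * a⁻¹ ∈ B1)
    (hAp : p.Coprime (Nat.card A1)) (hBp : p.Coprime (Nat.card B1))
    (hprod : ∀ g : G, ∃ a ∈ A, ∃ b ∈ B, g = a * b) :
    ∃ K : Subgroup G, A1 ≤ K ∧ B1 ≤ K ∧ p.Coprime (Nat.card K) ∧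
      ∀ g : G, ∃ x ∈ P, ∃ y ∈ K, g = x * y := by
  obtain ⟨i, hi2⟩ := IsPGroup.iff_card.1 hP
  obtain ⟨K0, hK0⟩ := Subgroup.exists_right_complement'_of_coprime (N := P) (by
    rw [hi2]; exact Nat.Coprime.pow_left _ hi)
  have hKc : p.Coprime (Nat.card K0) := by
    rwa [← hK0.symm.index_eq_card]
  have htop := hK0.sup_eq_top
  obtain ⟨g, hg⟩ := aux_conj p _ P K0 A1 rfl hP hKc hAp (by rw [htop]; exact le_top)
  obtain ⟨h, hh⟩ := aux_conj p _ P K0 B1 rfl hP hKc hBp (by rw [htop]; exact le_top)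
  obtain ⟨a, ha, b, hb, hab⟩ := hprod (g * h⁻¹)
  have ht : a⁻¹ * g = b * h := by
    have : g = a * b * h := by rw [← hab]; group
    rw [this]; group
  set t := a⁻¹ * g with htd
  refine ⟨K0.map (MulAut.conj t).toMonoidHom, ?_, ?_, ?_, ?_⟩
  · intro x hx
    refine ⟨t⁻¹ * x * t, ?_, by simp [mul_assoc]⟩
    have := hg _ (hA a ha x hx)
    convert this using 1
    rw [htd]; group; rfl
  · intro x hx
    refine ⟨t⁻¹ * x * t, ?_, by simp [mul_assoc]⟩
    have := hh _ (hB b⁻¹ (B.inv_mem hb) x hx)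
    convert this using 1
    rw [ht]; group; rfl
  · exact hKc.coprime_dvd_right (Subgroup.card_map_dvd _ _)
  · intro u
    have : t⁻¹ * u * t ∈ P ⊔ K0 := by rw [htop]; trivial
    obtain ⟨x, hx, y, hy, e⟩ := Subgroup.mem_sup_of_normal_left.1 this
    refine ⟨t * x * t⁻¹, Subgroup.Normal.conj_mem inferInstance x hx t, t * y * t⁻¹,
      ⟨y, hy, by simp⟩, ?_⟩
    have : u = t * (x * y) * t⁻¹ := by rw [e]; group
    rw [this]; group

theorem aux_exists_N {G : Type*} [Group G] [Finite G] [Nontrivial G] {k : ℕ} {A B : Subgroup G}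
    (hA : Group.IsNilpotent ↥A) (hB : Group.IsNilpotent ↥B)
    (hprod : ∀ g : G, ∃ a ∈ A, ∃ b ∈ B, g = a * b)
    (hAsub : KSubmodularIn k A ⊤) (hBsub : KSubmodularIn k B ⊤) :
    ∃ N : Subgroup G, N.Normal ∧ ∃ r q m : ℕ, r.Prime ∧ q.Prime ∧ Nat.card N = r ∧ m ≤ k ∧ 
      (Subgroup.centralizer (N : Set G)).index = q ^ m := by
  have h1 : 1 < Nat.card G := Finite.one_lt_card
  obtain ⟨p, hpm, hmax⟩ := (Nat.card G).primeFactors.exists_max_image id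
    (Nat.nonempty_primeFactors.2 h1)
  have hp : p.Prime := Nat.prime_of_mem_primeFactors hpm
  have hpd : p ∣ Nat.card G := Nat.dvd_of_mem_primeFactors hpm
  have := Fact.mk hp
  have hmax' : ∀ q, q.Prime → q ∣ Nat.card G → q ≤ p := fun q hq hd =>
    hmax q (Nat.mem_primeFactors.2 ⟨hq, hd, by omega⟩)
  obtain ⟨QA, A1, hQA, hA1, hAp, hAd, hAc⟩ := aux_split p A hA
  obtain ⟨QB, B1, hQB, hB1, hBp, hBd, hBc⟩ := aux_split p B hB
  obtain ⟨RA, hRA, hRA2⟩ := aux_op hmax' hAsub hQA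
  obtain ⟨RB, hRB, hRB2⟩ := aux_op hmax' hBsub hQB
  obtain ⟨P, hPdef⟩ : ∃ P, P = RA ⊔ RB := ⟨_, rfl⟩
  have hPS : AuxS p ⊤ P := hPdef ▸ aux_S_sup hRA2 hRB2
  have hAP : QA ≤ P := hPdef ▸ hRA.trans le_sup_left
  have hBP : QB ≤ P := hPdef ▸ hRB.trans le_sup_right
  have hPn : P.Normal := ⟨fun x hx c => hPS.2.2 c trivial x hx⟩
  have hPp : IsPGroup p P := hPS.2.1
  have hfac : ∀ g : G, ∃ x ∈ QA, ∃ α ∈ A1, ∃ β ∈ B1, ∃ y ∈ QB, g = x * (α * β) * y := by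
    intro g
    obtain ⟨a, ha, b, hb, rfl⟩ := hprod g
    obtain ⟨x, hx, α, hα, rfl⟩ := hAd a ha
    obtain ⟨y, hy, β, hβ, rfl⟩ := hBd b hb
    refine ⟨x, hx, α, hα, β, hβ, y, hy, ?_⟩
    rw [hBc y hy β hβ]; group
  have hi : p.Coprime P.index := by
    let π := QuotientGroup.mk' P
    have hπ : ∀ x ∈ P, π x = 1 := fun x hx => (QuotientGroup.eq_one_iff x).2 hx
    have h2 := aux_card_mul (A1.map π) (B1.map π) (by
      intro g'
      obtain ⟨g, rfl⟩ := QuotientGroup.mk'_surjective P g'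
      obtain ⟨x, hx, α, hα, β, hβ, y, hy, rfl⟩ := hfac g
      refine ⟨π α, ⟨α, hα, rfl⟩, π β, ⟨β, hβ, rfl⟩, ?_⟩
      change π _ = _
      rw [map_mul, map_mul, map_mul, hπ x (hAP hx), hπ y (hBP hy), one_mul, mul_one])
    rw [← Subgroup.index_eq_card] at h2
    exact (Nat.Coprime.mul_right (hAp.coprime_dvd_right (Subgroup.card_map_dvd _ _))
      (hBp.coprime_dvd_right (Subgroup.card_map_dvd _ _))).coprime_dvd_right h2
  have hP1 : P ≠ ⊥ := by
    rintro h
    rw [h, Subgroup.index_bot] at hi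
    exact (Nat.Prime.coprime_iff_not_dvd hp).1 hi hpd
  have hnorm : ∀ {C Q C1 : Subgroup G}, (∀ a ∈ C, ∃ x ∈ Q, ∃ y ∈ C1, a = x * y) →
      (∀ x ∈ Q, ∀ y ∈ C1, x * y = y * x) → ∀ a ∈ C, ∀ x ∈ C1, a * x * a⁻¹ ∈ C1 := by
    intro C Q C1 h1 h2 a ha u hu
    obtain ⟨x, hx, y, hy, rfl⟩ := h1 a ha
    have h3 : y * u * y⁻¹ ∈ C1 := C1.mul_mem (C1.mul_mem hy hu) (C1.inv_mem hy)
    have h4 := h2 x hx _ h3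
    have h5 : x * y * u * (x * y)⁻¹ = x * (y * u * y⁻¹) * x⁻¹ := by group
    rw [h5, h4]
    simpa using h3
  obtain ⟨K, hAK, hBK, hKp, hG⟩ := aux_K p P A B A1 B1 hPp hi (hnorm hAd hAc) (hnorm hBd hBc)
    hAp hBp hprod
  obtain ⟨i, hi2⟩ := IsPGroup.iff_card.1 hPp
  have hPK : P ⊓ K = ⊥ := (Subgroup.disjoint_of_coprime_natCard
    (by rw [hi2]; exact (Nat.Coprime.pow_left _ hKp))).eq_bot
  have hKd : ∀ g ∈ K, ∃ a ∈ A1, ∃ b ∈ B1, g = a * b := by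
    intro g hg
    obtain ⟨x, hx, α, hα, β, hβ, y, hy, e⟩ := hfac g
    refine ⟨α, hα, β, hβ, ?_⟩
    have hab : α * β ∈ K := K.mul_mem (hAK hα) (hBK hβ)
    have h2 : (α * β)⁻¹ * g ∈ P ⊓ K := by
      refine ⟨?_, K.mul_mem (K.inv_mem hab) hg⟩
      have h3 := hPn.conj_mem x (hAP hx) (α * β)⁻¹
      have h4 := P.mul_mem h3 (hBP hy)
      convert h4 using 1
      rw [e]; group; rfl
    rw [hPK, Subgroup.mem_bot, inv_mul_eq_one] at h2
    exact h2.symm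
  have hPd : ∀ g ∈ P, ∃ a ∈ QA, ∃ b ∈ QB, g = a * b := by
    intro g hg
    obtain ⟨x, hx, α, hα, β, hβ, y, hy, e⟩ := hfac g
    refine ⟨x, hx, y, hy, ?_⟩
    have h2 : α * β ∈ P ⊓ K := by
      refine ⟨?_, K.mul_mem (hAK hα) (hBK hβ)⟩
      have h3 : α * β = x⁻¹ * g * y⁻¹ := by rw [e]; group
      rw [h3]
      exact P.mul_mem (P.mul_mem (P.inv_mem (hAP hx)) hg) (P.inv_mem (hBP hy))
    rw [hPK, Subgroup.mem_bot] at h2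
    rw [e, h2, mul_one]
  have hnt : Nontrivial P := (Subgroup.nontrivial_iff_ne_bot P).2 hP1
  have hc := hPp.center_nontrivial
  set Z : Subgroup G := (Subgroup.center P).map P.subtype with hZdef
  have hZn : Z.Normal := inferInstance
  have hZP : Z ≤ P := Subgroup.map_subtype_le _
  have hZc : ∀ x ∈ Z, ∀ y ∈ P, x * y = y * x := by
    rintro _ ⟨x, hx, rfl⟩ y hy
    have := (Subgroup.mem_center_iff.1 hx) ⟨y, hy⟩
    exact (congrArg Subtype.val this).symm
  have hZ1 : Z ≠ ⊥ := by
    intro h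
    rw [hZdef, Subgroup.map_eq_bot_iff_of_injective _ P.subtype_injective] at h
    exact (Subgroup.nontrivial_iff_ne_bot _).1 hc h
  obtain ⟨N, ⟨hNn, hN1, hNZ⟩, hNmin⟩ := 
    (Set.toFinite {M : Subgroup G | M.Normal ∧ M ≠ ⊥ ∧ M ≤ Z}).exists_minimal
      ⟨Z, hZn, hZ1, le_rfl⟩
  have hmin : ∀ M : Subgroup G, M.Normal → M ≤ N → M = ⊥ ∨ M = N := by
    intro M hM hMN
    by_cases h : M = ⊥
    · exact Or.inl h
    · exact Or.inr (le_antisymm hMN (hNmin ⟨hM, h, hMN.trans hNZ⟩ hMN))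
  have hNP := hNZ.trans hZP
  have hNc : ∀ x ∈ N, ∀ y ∈ P, x * y = y * x := fun x hx => hZc x (hNZ hx)
  have hpN : IsPGroup p N := hPp.to_le hNP
  obtain ⟨j, hj⟩ := IsPGroup.iff_card.1 hpN
  have hPC : P ≤ Subgroup.centralizer (N : Set G) := fun y hy =>
    Subgroup.mem_centralizer_iff.2 fun x hx => hNc x hx y hy
  refine ⟨N, hNn, ?_⟩
  rcases aux_cent P K A1 B1 QA QB N hAK hBK hAc hBc hG hKd hPd hNP hNc
    (by rw [hj]; exact Nat.Coprime.pow_left _ hKp) hmin with h | h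
  · obtain ⟨h2, h3⟩ := aux_fin2 hpN hB hAd hBd hB1 hBp hAP hBP hprod hPC h
    exact aux_final N B hN1 hmin h2 h3 hBsub
  · have hprod' : ∀ g : G, ∃ b ∈ B, ∃ a ∈ A, g = b * a := by
      intro g
      obtain ⟨a, ha, b, hb, e⟩ := hprod g⁻¹
      exact ⟨b⁻¹, B.inv_mem hb, a⁻¹, A.inv_mem ha, by rw [← mul_inv_rev, ← e, inv_inv]⟩
    obtain ⟨h2, h3⟩ := aux_fin2 hpN hA hBd hAd hA1 hAp hBP hAP hprod' hPC h
    exact aux_final N A hN1 hmin h2 h3 hAsub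

theorem aux_main {k : ℕ} (hk : 0 < k) (n : ℕ) : ∀ {G : Type*} [Group G] [Finite G] 
    {A B : Subgroup G}, Nat.card G = n → Group.IsNilpotent ↥A → Group.IsNilpotent ↥B →
    (∀ g : G, ∃ a ∈ A, ∃ b ∈ B, g = a * b) → KSubmodularIn k A ⊤ → KSubmodularIn k B ⊤ →
    IsSupersolvable G ∧ ∀ H : Subgroup G, KSubmodularIn k H ⊤ := by
  induction n using Nat.strong_induction_on with
  | _ n ih =>
  intro G _ _ A B hn hA hB hprod hAs hBs
  rcases subsingleton_or_nontrivial G with hG | hG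
  · refine ⟨⟨0, fun _ => ⊥, rfl, Subsingleton.elim _ _, fun _ => inferInstance, by simp, by simp⟩,
      fun H => ⟨0, fun _ => H, rfl, Subsingleton.elim _ _, by simp⟩⟩
  obtain ⟨N, hNn, r, q, m, hr, hq, hNr, hm, hC⟩ := aux_exists_N hA hB hprod hAs hBs
  let π := QuotientGroup.mk' N
  have hπ : Function.Surjective π := QuotientGroup.mk'_surjective N
  have hcard : Nat.card (G ⧸ N) < n := by
    rw [← hn, ← Subgroup.index_eq_card, ← Subgroup.card_mul_index N]
    have : 1 < Nat.card N := by rw [hNr]; exact hr.one_lt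
    have : 0 < N.index := Nat.pos_of_ne_zero Subgroup.index_ne_zero_of_finite
    nlinarith
  have htop : (⊤ : Subgroup G).map π = ⊤ := Subgroup.map_top_of_surjective π hπ
  obtain ⟨h1, h2⟩ := ih _ hcard (A := A.map π) (B := B.map π) rfl
    (Group.nilpotent_of_surjective (π.subgroupMap A) (π.subgroupMap_surjective A))
    (Group.nilpotent_of_surjective (π.subgroupMap B) (π.subgroupMap_surjective B))
    (by
      intro g'
      obtain ⟨g, rfl⟩ := hπ g'
      obtain ⟨a, ha, b, hb, rfl⟩ := hprod g
      exact ⟨π a, ⟨a, ha, rfl⟩, π b, ⟨b, hb, rfl⟩, map_mul _ _ _⟩)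
    (by have := aux_ks_map π k _ _ hAs; rwa [htop] at this)
    (by have := aux_ks_map π k _ _ hBs; rwa [htop] at this)
  have := Fact.mk hr
  have hcyc : IsCyclic N := isCyclic_of_prime_card hNr
  refine ⟨aux_ss_lift N h1, fun H => ?_⟩
  have h3 := aux_ks_comap π hπ k _ _ (h2 (H.map π))
  rw [Subgroup.comap_map_eq, QuotientGroup.ker_mk', Subgroup.comap_top] at h3
  obtain ⟨n', hn', hnk, hme⟩ := aux_step hk N H r q m hr hq hNr hm hC
  exact aux_ks_cons hn' hnk hme h3

/-- Theorem 6: if `G = AB` is the product of nilpotent subgroups `A` and `B`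
which are both `k`-submodular in `G`, then `G` is supersoluble and every Sylow
subgroup of `G` is `k`-submodular in `G`. -/
theorem supersolvable_of_product_nilpotent_kSubmodular {G : Type*} [Group G]
    [Finite G] {k : ℕ} (hk : 0 < k) {A B : Subgroup G}
    (hA : Group.IsNilpotent ↥A) (hB : Group.IsNilpotent ↥B)
    (hprod : ∀ g : G, ∃ a ∈ A, ∃ b ∈ B, g = a * b)
    (hAsub : KSubmodularIn k A ⊤) (hBsub : KSubmodularIn k B ⊤) :
    IsSupersolvable G ∧
      ∀ (p : ℕ) (P : Sylow p G), KSubmodularIn k (P : Subgroup G) ⊤ := by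
  obtain ⟨h1, h2⟩ := aux_main hk _ rfl hA hB hprod hAsub hBsub
  exact ⟨h1, fun p P => h2 P⟩
end
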